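/- The number of vertices of the convex hull of the set of lattice points in Z^d within Euclidean distance r of the origin is Θ(r^{d(d−1)/(d+1)}); in particular for d = 2 it is Θ(r^{2/3}). -/

import Mathlib

/-- `V_d(r)`: the set of lattice points of `ℤ^d` that are vertices (extreme points)
of the convex hull of `B_d(r) = {p ∈ ℤ^d : ‖p‖₂ ≤ r}`. -/
def Vd (d r : ℕ) : Set (Fin d → ℤ) :=
  {p | (fun i => (p i : ℝ)) ∈ Set.extremePoints ℝ (convexHull ℝ
      {x : Fin d → ℝ | ∃ q : Fin d → ℤ,
        (∑ i, (q i : ℝ) ^ 2) ≤ (r : ℝ) ^ 2 ∧ x = fun i => (q i : ℝ)})}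

/-
Upper bound. If `v` is a vertex of the hull of the ball, then `2v` lies outside the hull of the
sums of two distinct points of the ball, so a facet of that hull separates it, and distinct
vertices are separated by distinct facets. Let such a facet be the functional `f` with linearly
independent contact points `p`; then `|det p| • f` is an integer vector `a`. Few of these have all
coordinates at most `A` in absolute value; the others have `|det p|` of order at least `r * A`, and
the simplices spanned by their contact points are disjoint inside a box of side `O(r)`. Taking
`A = r ^ ((d - 1) / (d + 1))` balances the two counts.

Lower bound. A positive proportion of the normals `a ∈ [1, A] ^ d` are primitive and orthogonal to
no very short nonzero lattice vector. For these, a sumset estimate modulo a coordinate of `a` shows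
that every small value of `a ⬝ᵥ x` is attained at a short `x`, so some lattice point of the ball
lies in the cap of depth `O(1 / |a|)` in direction `a`. A vertex maximal in direction `a` then
determines `a`: another such normal at which it is maximal vanishes on all short vectors orthogonal
to `a`, and these span the hyperplane orthogonal to `a`.
-/

open MeasureTheory Matrix Pointwise Finset

section Polar

theorem exists_mem_extremePoints_forall_le {E : Type*} [AddCommGroup E] [Module ℝ E]
    [TopologicalSpace E] [T2Space E] [IsTopologicalAddGroup E] [ContinuousSMul ℝ E]
    [LocallyConvexSpace ℝ E] {K : Set E} (hK : IsCompact K) (hne : K.Nonempty) (l : E →L[ℝ] ℝ) :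
    ∃ e ∈ K.extremePoints ℝ, ∀ y ∈ K, l y ≤ l e := by
  have hexposed : IsExposed ℝ K (l.toExposed K) := ContinuousLinearMap.toExposed.isExposed
  obtain ⟨m, hm, hmax⟩ := hK.exists_isMaxOn hne l.continuous.continuousOn
  obtain ⟨e, he⟩ := (hexposed.isCompact hK).extremePoints_nonempty ⟨m, hm, fun y hy => hmax hy⟩
  exact ⟨e, hexposed.isExtreme.extremePoints_subset_extremePoints he, (extremePoints_subset he).2⟩

variable {ι : Type*} [Fintype ι]

theorem exists_mem_extremePoints_forall_dotProduct_le {K : Set (ι → ℝ)} (hK : IsCompact K)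
    (hne : K.Nonempty) (w : ι → ℝ) : ∃ e ∈ K.extremePoints ℝ, ∀ y ∈ K, w ⬝ᵥ y ≤ w ⬝ᵥ e :=
  exists_mem_extremePoints_forall_le hK hne (dotProductBilin ℝ ℝ w).toContinuousLinearMap

theorem exists_forall_eq_dotProduct (φ : Module.Dual ℝ (ι → ℝ)) : ∃ g, ∀ x, φ x = g ⬝ᵥ x := by
  classical
  obtain ⟨g, rfl⟩ := (dotProductEquiv ℝ ι).surjective φ
  exact ⟨g, fun _ => rfl⟩

/-- The polar `{f | f ⬝ᵥ x ≤ 1 for all x ∈ X}` of a set of points of `ℝ^ι`, used to dualise facets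
of the convex hull of `X` into points. It is the one-sided polar, whereas `LinearMap.polar` bounds
the absolute value. -/
def polarSet (X : Set (ι → ℝ)) : Set (ι → ℝ) := {f | ∀ x ∈ X, f ⬝ᵥ x ≤ 1}

theorem isClosed_polarSet (X : Set (ι → ℝ)) : IsClosed (polarSet X) := by
  simp only [polarSet, Set.ofPred_forall]
  exact isClosed_biInter fun x _ => isClosed_le (by unfold dotProduct; fun_prop) continuous_const

theorem exists_mem_polarSet_one_lt_dotProduct {C : Set (ι → ℝ)} (hconv : Convex ℝ C)
    (hclosed : IsClosed C) (h0 : 0 ∈ C) {v : ι → ℝ} (hv : v ∉ C) :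
    ∃ f ∈ polarSet C, 1 < f ⬝ᵥ v := by
  obtain ⟨φ, u, hφ, hu⟩ := geometric_hahn_banach_closed_point hconv hclosed hv
  have hu0 : 0 < u := by simpa using hφ 0 h0
  obtain ⟨g, hg⟩ := exists_forall_eq_dotProduct φ.toLinearMap
  simp only [ContinuousLinearMap.coe_coe] at hg
  refine ⟨u⁻¹ • g, fun x hx => ?_, ?_⟩
  · rw [smul_dotProduct, ← hg, smul_eq_mul, inv_mul_le_iff₀ hu0, mul_one]
    exact (hφ x hx).le
  · rwa [smul_dotProduct, ← hg, smul_eq_mul, lt_inv_mul_iff₀ hu0, mul_one]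

theorem eventually_add_smul_mem_polarSet {X : Set (ι → ℝ)} (hX : X.Finite) {e g : ι → ℝ}
    (he : e ∈ polarSet X) (hg : ∀ x ∈ X, e ⬝ᵥ x = 1 → g ⬝ᵥ x = 0) :
    ∀ᶠ ε : ℝ in nhds 0, e + ε • g ∈ polarSet X := by
  refine (Filter.eventually_all_finite hX).2 fun x hx => ?_
  simp only [add_dotProduct, smul_dotProduct]
  by_cases hx1 : e ⬝ᵥ x = 1
  · simp [hg x hx hx1, hx1]
  · have hlt : e ⬝ᵥ x + (0 : ℝ) • (g ⬝ᵥ x) < 1 := by simpa using (he x hx).lt_of_ne hx1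
    have hcont : Continuous fun ε : ℝ => e ⬝ᵥ x + ε • (g ⬝ᵥ x) := by fun_prop
    exact (hcont.continuousAt.eventually_lt_const hlt).mono fun _ h => h.le

theorem span_eq_top_of_mem_extremePoints_polarSet {X : Set (ι → ℝ)} (hX : X.Finite) {e : ι → ℝ}
    (he : e ∈ (polarSet X).extremePoints ℝ) :
    Submodule.span ℝ {x ∈ X | e ⬝ᵥ x = 1} = ⊤ := by
  by_contra hne
  obtain ⟨φ, hφ0, hφ⟩ := Submodule.exists_le_ker_of_lt_top _ (lt_top_iff_ne_top.2 hne)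
  obtain ⟨g, hg⟩ := exists_forall_eq_dotProduct φ
  have hg0 : g ≠ 0 := by
    rintro rfl
    exact hφ0 (LinearMap.ext fun x => by simp [hg])
  have hplus := eventually_add_smul_mem_polarSet (g := g) hX (extremePoints_subset he)
    fun x hx hx1 => (hg x).symm.trans (hφ (Submodule.subset_span ⟨hx, hx1⟩))
  have hneg : Filter.Tendsto (fun ε : ℝ => -ε) (nhds 0) (nhds 0) := by
    simpa using (continuous_neg (G := ℝ)).tendsto 0
  have hboth := (hplus.and (hneg.eventually hplus)).filter_mono
    (nhdsWithin_le_nhds (s := Set.Ioi (0 : ℝ)))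
  obtain ⟨ε, ⟨h₁, h₂⟩, hε⟩ := (hboth.and self_mem_nhdsWithin).exists
  have hmid : e ∈ openSegment ℝ (e + ε • g) (e + -ε • g) :=
    ⟨1 / 2, 1 / 2, by norm_num, by norm_num, by norm_num, by module⟩
  have heq := (mem_extremePoints.1 he).2 _ h₁ _ h₂ hmid
  have hsmul : ε • g = 0 := by simpa using heq.1
  exact hg0 ((smul_eq_zero.1 hsmul).resolve_left (ne_of_gt hε))

/-- The functional `f` is at most `1` on `X`, with equality at the linearly independent points
`p i` of `X`. When `0` is interior to the convex hull of `X`, this says that `{f = 1}` supports a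
facet of the hull and that the `p i` span that facet. -/
structure IsFacetBasis (X : Set (ι → ℝ)) (f : ι → ℝ) (p : ι → ι → ℝ) : Prop where
  mem_polarSet : f ∈ polarSet X
  mem : ∀ i, p i ∈ X
  dotProduct_eq_one : ∀ i, f ⬝ᵥ p i = 1
  linearIndependent : LinearIndependent ℝ p

theorem exists_isFacetBasis_of_mem_extremePoints_polarSet {X : Set (ι → ℝ)} (hX : X.Finite)
    {e : ι → ℝ} (he : e ∈ (polarSet X).extremePoints ℝ) : ∃ p, IsFacetBasis X e p := by
  obtain ⟨q, hqmem, -, hqli⟩ :=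
    Submodule.exists_fun_fin_finrank_span_eq ℝ {x ∈ X | e ⬝ᵥ x = 1}
  have hcard : Module.finrank ℝ (Submodule.span ℝ {x ∈ X | e ⬝ᵥ x = 1}) = Fintype.card ι := by
    rw [span_eq_top_of_mem_extremePoints_polarSet hX he, finrank_top,
      Module.finrank_fintype_fun_eq_card]
  let σ := Fintype.equivFinOfCardEq hcard.symm
  exact ⟨q ∘ σ, extremePoints_subset he, fun i => (hqmem (σ i)).1, fun i => (hqmem (σ i)).2,
    hqli.comp σ σ.injective⟩

theorem exists_isFacetBasis_one_lt_dotProduct {X : Set (ι → ℝ)} (hX : X.Finite) (h0 : 0 ∈ X)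
    (hbdd : Bornology.IsBounded (polarSet X)) {v : ι → ℝ} (hv : v ∉ convexHull ℝ X) :
    ∃ f p, IsFacetBasis X f p ∧ 1 < f ⬝ᵥ v := by
  have hcompact := Metric.isCompact_of_isClosed_isBounded (isClosed_polarSet X) hbdd
  obtain ⟨g, hg, hgv⟩ := exists_mem_polarSet_one_lt_dotProduct (convex_convexHull ℝ X)
    (hX.isCompact_convexHull ℝ).isClosed (subset_convexHull ℝ X h0) hv
  have hgX : g ∈ polarSet X := fun x hx => hg x (subset_convexHull ℝ X hx)
  obtain ⟨e, he, hmax⟩ := exists_mem_extremePoints_forall_dotProduct_le hcompact ⟨g, hgX⟩ v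
  obtain ⟨p, hp⟩ := exists_isFacetBasis_of_mem_extremePoints_polarSet hX he
  have hge := hmax g hgX
  rw [dotProduct_comm v, dotProduct_comm v] at hge
  exact ⟨e, p, hp, hgv.trans_le hge⟩

namespace IsFacetBasis

variable {X : Set (ι → ℝ)} {f g : ι → ℝ} {p q : ι → ι → ℝ}

theorem eq_of_forall_dotProduct_eq_one (h : IsFacetBasis X f p) (hg : ∀ i, g ⬝ᵥ p i = 1) :
    g = f := by
  classical
  have hspan : Submodule.span ℝ (Set.range p) = ⊤ :=
    h.linearIndependent.span_eq_top_of_card_eq_finrank' (Module.finrank_fintype_fun_eq_card ℝ).symm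
  refine (dotProductEquiv ℝ ι).injective (LinearMap.ext_on_range hspan fun i => ?_)
  exact (hg i).trans (h.dotProduct_eq_one i).symm

theorem eq_of_smul_eq_smul [Nonempty ι] (hf : IsFacetBasis X f p) (hg : IsFacetBasis X g q)
    {k l : ℝ} (hk : 0 < k) (hl : 0 < l) (hkl : k • f = l • g) : f = g := by
  have i := Classical.arbitrary ι
  have hle : k ≤ l := by
    have h := congrArg (· ⬝ᵥ p i) hkl
    simp only [smul_dotProduct, hf.dotProduct_eq_one, smul_eq_mul, mul_one] at h
    exact h.trans_le (mul_le_of_le_one_right hl.le (hg.mem_polarSet _ (hf.mem i)))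
  have hge : l ≤ k := by
    have h := congrArg (· ⬝ᵥ q i) hkl.symm
    simp only [smul_dotProduct, hg.dotProduct_eq_one, smul_eq_mul, mul_one] at h
    exact h.trans_le (mul_le_of_le_one_right hk.le (hf.mem_polarSet _ (hg.mem i)))
  rw [hle.antisymm hge] at hkl
  exact smul_right_injective _ hl.ne' hkl

end IsFacetBasis

end Polar

section Packing

variable {ι : Type*} [Fintype ι]

/-- The open corner simplex `{l | 0 < l i for all i, ∑ i, l i < 1}` of `ℝ^ι`; its images under
`Fintype.linearCombination ℝ p` are the open simplices with vertices `0` and the points `p i`. -/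
def cornerSimplex (ι : Type*) [Fintype ι] : Set (ι → ℝ) := {l | (∀ i, 0 < l i) ∧ ∑ i, l i < 1}

theorem isOpen_cornerSimplex : IsOpen (cornerSimplex ι) := by
  simp only [cornerSimplex, Set.ofPred_and, Set.ofPred_forall]
  exact (isOpen_iInter_of_finite fun i => isOpen_lt continuous_const (continuous_apply i)).inter
    (isOpen_lt (by fun_prop) continuous_const)

theorem cornerSimplex_nonempty : (cornerSimplex ι).Nonempty := by
  refine ⟨fun _ => 1 / (Fintype.card ι + 1), fun _ => by positivity, ?_⟩
  rw [sum_const, card_univ, nsmul_eq_mul, mul_one_div, div_lt_one (by positivity)]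
  exact lt_add_one _

theorem cornerSimplex_subset_Icc : cornerSimplex ι ⊆ Set.Icc 0 1 := fun _ hl =>
  ⟨fun i => (hl.1 i).le, fun i =>
    (single_le_sum (fun j _ => (hl.1 j).le) (mem_univ i)).trans hl.2.le⟩

theorem measureReal_cornerSimplex_pos : 0 < volume.real (cornerSimplex ι) :=
  ENNReal.toReal_pos (isOpen_cornerSimplex.measure_pos volume cornerSimplex_nonempty).ne'
    ((measure_mono cornerSimplex_subset_Icc).trans_lt isCompact_Icc.measure_lt_top).ne

theorem det_linearCombination [DecidableEq ι] (p : ι → ι → ℝ) :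
    LinearMap.det (Fintype.linearCombination ℝ p) = (of p).det := by
  have h : Fintype.linearCombination ℝ p = toLin' (of p)ᵀ := by
    ext i j
    simp [Fintype.linearCombination_apply, Pi.single_apply, ite_apply]
  rw [h, LinearMap.det_toLin', det_transpose]

theorem abs_linearCombination_apply_le {p : ι → ι → ℝ} {R : ℝ} (hR : 0 ≤ R)
    (hp : ∀ i j, |p i j| ≤ R) {l : ι → ℝ} (hl : l ∈ cornerSimplex ι) (j : ι) :
    |Fintype.linearCombination ℝ p l j| ≤ R := by
  calc |Fintype.linearCombination ℝ p l j| = |∑ i, l i * p i j| := by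
        simp [Fintype.linearCombination_apply]
    _ ≤ ∑ i, |l i * p i j| := abs_sum_le_sum_abs _ _
    _ ≤ ∑ i, l i * R := by
        gcongr with i
        rw [abs_mul, abs_of_pos (hl.1 i)]
        exact mul_le_mul_of_nonneg_left (hp i j) (hl.1 i).le
    _ ≤ R := by
        rw [← sum_mul]
        exact mul_le_of_le_one_left hR hl.2.le

theorem dotProduct_linearCombination (f : ι → ℝ) (p : ι → ι → ℝ) (l : ι → ℝ) :
    f ⬝ᵥ Fintype.linearCombination ℝ p l = ∑ i, l i * (f ⬝ᵥ p i) := by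
  simp [Fintype.linearCombination_apply, dotProduct_sum]

namespace IsFacetBasis

variable {X : Set (ι → ℝ)} {f g : ι → ℝ} {p q : ι → ι → ℝ}

theorem dotProduct_linearCombination_le (h : IsFacetBasis X f p) (hg : g ∈ polarSet X) {l : ι → ℝ}
    (hl : ∀ i, 0 ≤ l i) :
    g ⬝ᵥ Fintype.linearCombination ℝ p l ≤ f ⬝ᵥ Fintype.linearCombination ℝ p l := by
  simp only [dotProduct_linearCombination, h.dotProduct_eq_one]
  gcongr with i
  exacts [hl i, hg _ (h.mem i)]

theorem eq_of_dotProduct_linearCombination_eq (h : IsFacetBasis X f p) (hg : g ∈ polarSet X)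
    {l : ι → ℝ} (hl : ∀ i, 0 < l i)
    (heq : g ⬝ᵥ Fintype.linearCombination ℝ p l = f ⬝ᵥ Fintype.linearCombination ℝ p l) :
    g = f := by
  simp only [dotProduct_linearCombination, h.dotProduct_eq_one] at heq
  have hterm := (sum_eq_sum_iff_of_le fun i _ =>
    mul_le_mul_of_nonneg_left (hg _ (h.mem i)) (hl i).le).1 heq
  exact h.eq_of_forall_dotProduct_eq_one fun i => mul_left_cancel₀ (hl i).ne' (hterm i (mem_univ i))

theorem disjoint_image_cornerSimplex (hf : IsFacetBasis X f p) (hg : IsFacetBasis X g q)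
    (hne : f ≠ g) : Disjoint (Fintype.linearCombination ℝ p '' cornerSimplex ι)
      (Fintype.linearCombination ℝ q '' cornerSimplex ι) := by
  rw [Set.disjoint_left]
  rintro _ ⟨l, hl, rfl⟩ ⟨m, hm, heq⟩
  have hle := hg.dotProduct_linearCombination_le hf.mem_polarSet fun i => (hm.1 i).le
  rw [heq] at hle
  have hge := hf.dotProduct_linearCombination_le hg.mem_polarSet fun i => (hl.1 i).le
  exact hne (hf.eq_of_dotProduct_linearCombination_eq hg.mem_polarSet hl.1 (hge.antisymm hle)).symm

theorem measurableSet_image_cornerSimplex (h : IsFacetBasis X f p) :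
    MeasurableSet (Fintype.linearCombination ℝ p '' cornerSimplex ι) :=
  isOpen_cornerSimplex.measurableSet.image_of_continuousOn_injOn
    (LinearMap.continuous_of_finiteDimensional _).continuousOn
    h.linearIndependent.fintypeLinearCombination_injective.injOn

theorem card_mul_le_of_le_abs_det [DecidableEq ι] {α : Type*} {T : Finset α} {f : α → ι → ℝ}
    {p : α → ι → ι → ℝ} {R δ : ℝ} (hfp : ∀ t ∈ T, IsFacetBasis X (f t) (p t))
    (hinj : Set.InjOn f T) (hR : 0 ≤ R) (hX : ∀ x ∈ X, ∀ i, |x i| ≤ R)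
    (hδ : ∀ t ∈ T, δ ≤ |(of (p t)).det|) :
    #T * (δ * volume.real (cornerSimplex ι)) ≤ (2 * R) ^ Fintype.card ι := by
  let S (t : α) : Set (ι → ℝ) := Fintype.linearCombination ℝ (p t) '' cornerSimplex ι
  let B : Set (ι → ℝ) := Set.Icc (fun _ => -R) (fun _ => R)
  have hSB (t) (ht : t ∈ T) : S t ⊆ B := by
    rintro _ ⟨l, hl, rfl⟩
    have h := abs_linearCombination_apply_le hR (fun i => hX _ ((hfp t ht).mem i)) hl
    exact ⟨fun j => (abs_le.1 (h j)).1, fun j => (abs_le.1 (h j)).2⟩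
  have hdisj : (T : Set α).PairwiseDisjoint S := fun t ht t' ht' hne =>
    (hfp t ht).disjoint_image_cornerSimplex (hfp t' ht') (hinj.ne ht ht' hne)
  have hvol (t) : volume.real (S t) = |(of (p t)).det| * volume.real (cornerSimplex ι) := by
    simp [S, measureReal_def, Measure.addHaar_image_linearMap, det_linearCombination]
  have hB : volume B ≠ ⊤ := isCompact_Icc.measure_lt_top.ne
  calc #T * (δ * volume.real (cornerSimplex ι))
      = ∑ _t ∈ T, δ * volume.real (cornerSimplex ι) := by rw [sum_const, nsmul_eq_mul]
    _ ≤ ∑ t ∈ T, volume.real (S t) := by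
        gcongr with t ht
        rw [hvol]
        exact mul_le_mul_of_nonneg_right (hδ t ht) measureReal_nonneg
    _ = volume.real (⋃ t ∈ T, S t) :=
        (measureReal_biUnion_finset hdisj (fun t ht => (hfp t ht).measurableSet_image_cornerSimplex)
          fun t ht => measure_ne_top_of_subset (hSB t ht) hB).symm
    _ ≤ volume.real B := measureReal_mono (Set.iUnion₂_subset hSB) hB
    _ = (2 * R) ^ Fintype.card ι := by
        rw [measureReal_def, Real.volume_Icc_pi_toReal fun _ => by linarith]
        simp [two_mul]

end IsFacetBasis

end Packing

section Lattice

variable {ι : Type*}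

/-- The lattice point `x` of `ℤ^ι`, viewed as a point of `ℝ^ι`. -/
def realVec (x : ι → ℤ) : ι → ℝ := fun i => x i

@[simp]
theorem realVec_apply (x : ι → ℤ) (i : ι) : realVec x i = x i := rfl

theorem realVec_injective : Function.Injective (realVec (ι := ι)) := fun _ _ h =>
  funext fun i => Int.cast_injective (congrFun h i)

theorem realVec_add (x y : ι → ℤ) : realVec (x + y) = realVec x + realVec y := by
  ext i; simp

theorem realVec_single [DecidableEq ι] (i : ι) (c : ℤ) :
    realVec (Pi.single i c) = Pi.single i (c : ℝ) :=
  funext (Pi.apply_single (fun _ => Int.cast) (fun _ => Int.cast_zero) i c)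

/-- The lattice points that are vertices of the convex hull of the set `S ⊆ ℤ^ι`. -/
def hullVertices (S : Set (ι → ℤ)) : Set (ι → ℤ) :=
  {p | realVec p ∈ (convexHull ℝ (realVec '' S)).extremePoints ℝ}

theorem hullVertices_subset (S : Set (ι → ℤ)) : hullVertices S ⊆ S := fun _ hp => by
  obtain ⟨q, hq, hqp⟩ := extremePoints_convexHull_subset hp
  exact realVec_injective hqp ▸ hq

/-- The sums of two distinct elements of `S`. They stand for the midpoints of distinct points of
`S`, from which the vertices of the hull of `S` are separated; doubling keeps them integral. -/
def pairSums (S : Set (ι → ℤ)) : Set (ι → ℤ) := {x | ∃ p ∈ S, ∃ q ∈ S, p ≠ q ∧ x = p + q}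

theorem pairSums_finite {S : Set (ι → ℤ)} (hS : S.Finite) : (pairSums S).Finite :=
  (hS.add hS).subset fun _ ⟨_, hp, _, hq, _, hx⟩ => hx ▸ Set.add_mem_add hp hq

theorem two_smul_notMem_convexHull_pairSums {S : Set (ι → ℤ)} {v : ι → ℤ}
    (hv : v ∈ hullVertices S) : (2 : ℝ) • realVec v ∉ convexHull ℝ (realVec '' pairSums S) := by
  set H := convexHull ℝ (realVec '' S)
  have hH : Convex ℝ H := convex_convexHull ℝ _
  have hdiff := (hH.mem_extremePoints_iff_convex_sdiff.1 hv).2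
  have hsub : realVec '' pairSums S ⊆ (fun x => (2⁻¹ : ℝ) • x) ⁻¹' (H \ {realVec v}) := by
    rintro _ ⟨_, ⟨p, hp, q, hq, hpq, rfl⟩, rfl⟩
    have hpH : realVec p ∈ H := subset_convexHull ℝ _ ⟨p, hp, rfl⟩
    have hqH : realVec q ∈ H := subset_convexHull ℝ _ ⟨q, hq, rfl⟩
    have hmid : (2⁻¹ : ℝ) • realVec (p + q) ∈ openSegment ℝ (realVec p) (realVec q) :=
      ⟨2⁻¹, 2⁻¹, by norm_num, by norm_num, by norm_num, by rw [realVec_add, smul_add]⟩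
    refine ⟨hH.openSegment_subset hpH hqH hmid, fun hmem => hpq ?_⟩
    have h := (mem_extremePoints.1 hv).2 _ hpH _ hqH (hmem ▸ hmid)
    exact realVec_injective (h.1.trans h.2.symm)
  intro hmem
  have h := convexHull_min hsub (hdiff.smul_preimage _) hmem
  exact h.2 (inv_smul_smul₀ two_ne_zero _)

variable [Fintype ι]

theorem realVec_dotProduct (x y : ι → ℤ) : realVec x ⬝ᵥ realVec y = ((x ⬝ᵥ y : ℤ) : ℝ) :=
  ((Int.castRingHom ℝ).map_dotProduct x y).symm

theorem exists_mem_hullVertices_forall_dotProduct_le {S : Set (ι → ℤ)} (hS : S.Finite)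
    (hne : S.Nonempty) (a : ι → ℤ) : ∃ v ∈ hullVertices S, ∀ x ∈ S, a ⬝ᵥ x ≤ a ⬝ᵥ v := by
  obtain ⟨e, he, hmax⟩ := exists_mem_extremePoints_forall_dotProduct_le
    ((hS.image realVec).isCompact_convexHull ℝ) (hne.image realVec).convexHull (realVec a)
  obtain ⟨v, -, rfl⟩ := extremePoints_convexHull_subset he
  refine ⟨v, he, fun x hx => ?_⟩
  have h := hmax _ (subset_convexHull ℝ _ ⟨x, hx, rfl⟩)
  rw [realVec_dotProduct, realVec_dotProduct] at h
  exact_mod_cast h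

theorem eq_of_mem_polarSet_pairSums {S : Set (ι → ℤ)} {f : ι → ℝ}
    (hf : f ∈ polarSet (realVec '' pairSums S)) {v w : ι → ℤ} (hv : v ∈ S) (hw : w ∈ S)
    (hfv : 1 < f ⬝ᵥ (2 : ℝ) • realVec v) (hfw : 1 < f ⬝ᵥ (2 : ℝ) • realVec w) : v = w := by
  by_contra hne
  have h := hf _ ⟨v + w, ⟨v, hv, w, hw, hne, rfl⟩, rfl⟩
  rw [realVec_add, dotProduct_add] at h
  rw [dotProduct_smul, smul_eq_mul] at hfv hfw
  linarith

variable [DecidableEq ι]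

theorem exists_abs_det_smul_eq_realVec {p : ι → ι → ℝ} (hp : ∀ i, p i ∈ Set.range realVec)
    {f : ι → ℝ} (b : ι → ℤ) (hf : ∀ i, f ⬝ᵥ p i = b i) :
    ∃ a : ι → ℤ, |(of p).det| • f = realVec a := by
  choose P hP using hp
  have hcast : of p = (of P).map (Int.castRingHom ℝ) := by
    ext i j
    simp [← hP]
  have hdet : (of p).det = ((of P).det : ℤ) := by
    rw [hcast, ← RingHom.mapMatrix_apply, ← RingHom.map_det, eq_intCast]
  have hadj : (of p).adjugate = (of P).adjugate.map (Int.castRingHom ℝ) := by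
    rw [hcast, ← RingHom.mapMatrix_apply, ← RingHom.map_adjugate, RingHom.mapMatrix_apply]
  have hmulVec : of p *ᵥ f = realVec b := by
    ext i
    exact (dotProduct_comm _ _).trans (hf i)
  have hcramer : (of p).det • f = realVec ((of P).adjugate *ᵥ b) := by
    rw [← one_mulVec f, ← smul_mulVec, ← adjugate_mul, ← mulVec_mulVec, hmulVec, hadj]
    ext i
    exact ((Int.castRingHom ℝ).map_mulVec (of P).adjugate b i).symm
  have habs : |(of p).det| = (((of P).det.sign * (of P).det : ℤ) : ℝ) := by
    rw [Int.sign_mul_self_eq_abs, hdet, Int.cast_abs]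
  refine ⟨(of P).det.sign • ((of P).adjugate *ᵥ b), ?_⟩
  rw [habs, Int.cast_mul, ← hdet, mul_smul, hcramer]
  ext i
  simp

end Lattice

section LatticeBall

variable {ι : Type*} [Fintype ι] {r : ℕ}

/-- The lattice points of `ℤ^ι` within Euclidean distance `r` of the origin. -/
def latticeBall (ι : Type*) [Fintype ι] (r : ℕ) : Set (ι → ℤ) := {q | q ⬝ᵥ q ≤ (r : ℤ) ^ 2}

theorem Vd_eq_hullVertices_latticeBall (d r : ℕ) :
    Vd d r = hullVertices (latticeBall (Fin d) r) := by
  have h : {x : Fin d → ℝ | ∃ q : Fin d → ℤ, (∑ i, (q i : ℝ) ^ 2) ≤ (r : ℝ) ^ 2 ∧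
      x = fun i => (q i : ℝ)} = realVec '' latticeBall (Fin d) r := by
    ext x
    refine exists_congr fun q => and_congr ?_ eq_comm
    simp only [latticeBall, Set.mem_ofPred_eq, dotProduct, ← sq]
    exact_mod_cast Iff.rfl
  rw [Vd, h]
  rfl

theorem abs_le_of_mem_latticeBall {q : ι → ℤ} (hq : q ∈ latticeBall ι r) (i : ι) : |q i| ≤ r := by
  refine abs_le_of_sq_le_sq (le_trans ?_ hq) (Int.natCast_nonneg r)
  rw [sq]
  exact single_le_sum (f := fun i => q i * q i) (fun j _ => mul_self_nonneg _) (mem_univ i)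

theorem latticeBall_finite : (latticeBall ι r).Finite := by
  classical
  exact (Set.finite_Icc (fun _ => -(r : ℤ)) (fun _ => (r : ℤ))).subset fun _ hq =>
    ⟨fun i => (abs_le.1 (abs_le_of_mem_latticeBall hq i)).1,
      fun i => (abs_le.1 (abs_le_of_mem_latticeBall hq i)).2⟩

theorem zero_mem_latticeBall : (0 : ι → ℤ) ∈ latticeBall ι r := by
  simp [latticeBall]

theorem hullVertices_latticeBall_finite : (hullVertices (latticeBall ι r)).Finite :=
  latticeBall_finite.subset (hullVertices_subset _)

theorem one_le_ncard_hullVertices_latticeBall : 1 ≤ (hullVertices (latticeBall ι r)).ncard := by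
  obtain ⟨v, hv, -⟩ := exists_mem_hullVertices_forall_dotProduct_le
    (latticeBall_finite (ι := ι) (r := r)) ⟨0, zero_mem_latticeBall⟩ 0
  exact (Set.ncard_pos hullVertices_latticeBall_finite).2 ⟨v, hv⟩

theorem abs_le_of_mem_pairSums_latticeBall {x : ι → ℤ} (hx : x ∈ pairSums (latticeBall ι r))
    (i : ι) : |x i| ≤ 2 * r := by
  obtain ⟨p, hp, q, hq, -, rfl⟩ := hx
  refine (abs_add_le (p i) (q i)).trans ?_
  linarith [abs_le_of_mem_latticeBall hp i, abs_le_of_mem_latticeBall hq i]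

theorem single_mem_latticeBall [DecidableEq ι] (i : ι) {c : ℤ} (hc : |c| ≤ r) :
    Pi.single i c ∈ latticeBall ι r := by
  simpa [latticeBall, ← sq] using sq_le_sq.2 (hc.trans (le_abs_self (r : ℤ)))

theorem zero_mem_pairSums_latticeBall [Nonempty ι] (hr : 1 ≤ r) :
    0 ∈ pairSums (latticeBall ι r) := by
  classical
  have i := Classical.arbitrary ι
  refine ⟨Pi.single i r, single_mem_latticeBall i (by simp), Pi.single i (-r),
    single_mem_latticeBall i (by simp), (Pi.single_injective i).ne (by omega), ?_⟩
  rw [← Pi.single_add, add_neg_cancel, Pi.single_zero]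

theorem single_add_single_mem_pairSums_latticeBall [DecidableEq ι] (hr : 1 ≤ r) {i j : ι}
    (hij : i ≠ j) {b c : ℤ} (hb : |b| = r) (hc : |c| = r) :
    Pi.single i b + Pi.single j c ∈ pairSums (latticeBall ι r) := by
  refine ⟨_, single_mem_latticeBall i hb.le, _, single_mem_latticeBall j hc.le, fun h => ?_, rfl⟩
  have hb0 : b = 0 := by simpa [hij] using congrFun h i
  rw [hb0, abs_zero] at hb
  omega

theorem abs_le_of_mem_polarSet_pairSums_latticeBall [Nontrivial ι] (hr : 1 ≤ r) {f : ι → ℝ}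
    (hf : f ∈ polarSet (realVec '' pairSums (latticeBall ι r))) (i : ι) : |f i| ≤ 1 / r := by
  classical
  obtain ⟨j, hj⟩ := exists_ne i
  have hr0 : (0 : ℝ) < r := by exact_mod_cast hr
  have hle {b c : ℤ} (hb : |b| = r) (hc : |c| = r) : f i * b + f j * c ≤ 1 := by
    have h := hf _ ⟨_, single_add_single_mem_pairSums_latticeBall hr hj.symm hb hc, rfl⟩
    simpa [realVec_add, realVec_single] using h
  have h₁ := hle (b := r) (c := r) (by simp) (by simp)
  have h₂ := hle (b := r) (c := -r) (by simp) (by simp)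
  have h₃ := hle (b := -r) (c := r) (by simp) (by simp)
  have h₄ := hle (b := -r) (c := -r) (by simp) (by simp)
  push_cast at h₁ h₂ h₃ h₄
  rw [abs_le, ← neg_div, div_le_iff₀ hr0, le_div_iff₀ hr0]
  constructor <;> linarith

end LatticeBall

section UpperBound

variable {ι : Type*} [Fintype ι]

theorem card_le_of_forall_abs_le {α : Type*} {T : Finset α} {a : α → ι → ℤ} (ha : Set.InjOn a T)
    {A : ℕ} (hA : ∀ t ∈ T, ∀ i, |a t i| ≤ A) : #T ≤ (2 * A + 1) ^ Fintype.card ι := by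
  classical
  have hmaps : Set.MapsTo a T (Fintype.piFinset fun _ : ι => Icc (-(A : ℤ)) A) := fun t ht =>
    Fintype.mem_piFinset.2 fun i => mem_Icc.2 (abs_le.1 (hA t ht i))
  refine (card_le_card_of_injOn a hmaps ha).trans_eq ?_
  rw [Fintype.card_piFinset, prod_const, card_univ, Int.card_Icc]
  congr 1
  omega

theorem IsFacetBasis.abs_det_pos [DecidableEq ι] {X : Set (ι → ℝ)} {f : ι → ℝ} {p : ι → ι → ℝ}
    (h : IsFacetBasis X f p) : 0 < |(of p).det| :=
  have hunit : IsUnit (of p) := linearIndependent_rows_iff_isUnit.1 h.linearIndependent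
  abs_pos.2 ((isUnit_iff_isUnit_det _).1 hunit).ne_zero

-- Few facets have an integer vector `a = |det p| • f` with all coordinates at most `A`; the others
-- span simplices of volume at least a multiple of `A / c`, which have to fit into the box.
theorem IsFacetBasis.card_le [DecidableEq ι] [Nonempty ι] {X : Set (ι → ℝ)} {α : Type*}
    {T : Finset α} {f : α → ι → ℝ} {p : α → ι → ι → ℝ} {a : α → ι → ℤ} {A : ℕ} {R c : ℝ}
    (hfp : ∀ t ∈ T, IsFacetBasis X (f t) (p t)) (hinj : Set.InjOn f T)
    (ha : ∀ t ∈ T, |(of (p t)).det| • f t = realVec (a t)) (hA : 1 ≤ A) (hR : 0 ≤ R)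
    (hX : ∀ x ∈ X, ∀ i, |x i| ≤ R) (hc : 0 < c) (hpolar : ∀ g ∈ polarSet X, ∀ i, |g i| ≤ c) :
    (#T : ℝ) ≤ (2 * A + 1) ^ Fintype.card ι +
      (2 * R) ^ Fintype.card ι / (A / c * volume.real (cornerSimplex ι)) := by
  have hainj : Set.InjOn a T := fun s hs t ht hst => hinj hs ht <|
    (hfp s hs).eq_of_smul_eq_smul (hfp t ht) (hfp s hs).abs_det_pos (hfp t ht).abs_det_pos <| by
      rw [ha s hs, ha t ht, hst]
  have hsmall : #{t ∈ T | ∀ i, |a t i| ≤ A} ≤ (2 * A + 1) ^ Fintype.card ι :=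
    card_le_of_forall_abs_le (hainj.mono (filter_subset _ _)) fun t ht => (mem_filter.1 ht).2
  have hlarge : #{t ∈ T | ¬ ∀ i, |a t i| ≤ A} * (A / c * volume.real (cornerSimplex ι)) ≤
      (2 * R) ^ Fintype.card ι := by
    refine card_mul_le_of_le_abs_det (f := f) (fun t ht => hfp t (mem_filter.1 ht).1)
      (hinj.mono (filter_subset _ _)) hR hX fun t ht => ?_
    obtain ⟨ht, hat⟩ := mem_filter.1 ht
    obtain ⟨i, hi⟩ := not_forall.1 hat
    have hai : |(of (p t)).det| * |f t i| = |(a t i : ℝ)| := by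
      simpa [abs_mul] using congrArg abs (congrFun (ha t ht) i)
    have hAa : (A : ℝ) ≤ |(a t i : ℝ)| := by exact_mod_cast (not_le.1 hi).le
    have hfi : |f t i| ≤ c := hpolar _ (hfp t ht).mem_polarSet i
    rw [div_le_iff₀ hc]
    exact hAa.trans (hai.symm.trans_le (mul_le_mul_of_nonneg_left hfi (abs_nonneg _)))
  have hvol := measureReal_cornerSimplex_pos (ι := ι)
  rw [← card_filter_add_card_filter_not (s := T) fun t => ∀ i, |a t i| ≤ A, Nat.cast_add]
  exact add_le_add (mod_cast hsmall) ((le_div_iff₀ (by positivity)).2 hlarge)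

variable {r : ℕ}

theorem exists_isFacetBasis_of_mem_hullVertices [DecidableEq ι] [Nontrivial ι] (hr : 1 ≤ r)
    {v : ι → ℤ} (hv : v ∈ hullVertices (latticeBall ι r)) :
    ∃ f p, ∃ a : ι → ℤ, IsFacetBasis (realVec '' pairSums (latticeBall ι r)) f p ∧
      1 < f ⬝ᵥ (2 : ℝ) • realVec v ∧ |(of p).det| • f = realVec a := by
  have h0 : 0 ∈ realVec '' pairSums (latticeBall ι r) :=
    ⟨0, zero_mem_pairSums_latticeBall hr, by ext; simp⟩
  have hbdd : Bornology.IsBounded (polarSet (realVec '' pairSums (latticeBall ι r))) :=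
    (Metric.isBounded_Icc (fun _ => -(1 / r : ℝ)) fun _ => (1 / r : ℝ)).subset fun f hf =>
      have h := abs_le_of_mem_polarSet_pairSums_latticeBall hr hf
      ⟨fun i => (abs_le.1 (h i)).1, fun i => (abs_le.1 (h i)).2⟩
  obtain ⟨f, p, hfp, hfv⟩ := exists_isFacetBasis_one_lt_dotProduct
    ((pairSums_finite latticeBall_finite).image _) h0 hbdd
    (two_smul_notMem_convexHull_pairSums hv)
  obtain ⟨a, ha⟩ := exists_abs_det_smul_eq_realVec
    (fun i => Set.image_subset_range _ _ (hfp.mem i)) 1 (by simpa using hfp.dotProduct_eq_one)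
  exact ⟨f, p, a, hfp, hfv, ha⟩

theorem ncard_hullVertices_latticeBall_le [Nontrivial ι] {A : ℕ} (hr : 1 ≤ r) (hA : 1 ≤ A) :
    ((hullVertices (latticeBall ι r)).ncard : ℝ) ≤ (2 * A + 1) ^ Fintype.card ι +
      (4 * r) ^ Fintype.card ι / (r * A * volume.real (cornerSimplex ι)) := by
  classical
  choose! f p a hfp hfv ha using
    fun v (hv : v ∈ hullVertices (latticeBall ι r)) => exists_isFacetBasis_of_mem_hullVertices hr hv
  have hV := hullVertices_latticeBall_finite (ι := ι) (r := r)
  have hinj : Set.InjOn f hV.toFinset := by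
    rw [hV.coe_toFinset]
    exact fun v hv w hw hvw => eq_of_mem_polarSet_pairSums (hfp v hv).mem_polarSet
      (hullVertices_subset _ hv) (hullVertices_subset _ hw) (hfv v hv) (hvw ▸ hfv w hw)
  have hbox : ∀ x ∈ realVec '' pairSums (latticeBall ι r), ∀ i, |x i| ≤ 2 * r := by
    rintro _ ⟨x, hx, rfl⟩ i
    rw [realVec_apply]
    exact_mod_cast abs_le_of_mem_pairSums_latticeBall hx i
  rw [Set.ncard_eq_toFinset_card _ hV]
  have hcard := IsFacetBasis.card_le (fun v hv => hfp v (hV.mem_toFinset.1 hv)) hinj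
    (fun v hv => ha v (hV.mem_toFinset.1 hv)) hA (by positivity) hbox (by positivity)
    fun g hg => abs_le_of_mem_polarSet_pairSums_latticeBall hr hg
  refine hcard.trans_eq ?_
  rw [div_div_eq_mul_div, div_one, mul_comm (A : ℝ), ← mul_assoc 2 2]
  norm_num

end UpperBound

section Sumset

variable {G : Type*} [AddCommGroup G] [DecidableEq G]

theorem mem_nsmul_of_succ_nsmul_eq {D : Finset G} (h0 : 0 ∈ D)
    (hgen : AddSubgroup.closure (D : Set G) = ⊤) {k : ℕ} (hk : (k + 1) • D = k • D) (g : G) :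
    g ∈ k • D := by
  have hD : (D : Set G) ⊆ AddAction.stabilizer G (k • D) := fun x hx =>
    AddAction.mem_stabilizer_finset'.2 fun y hy => by
      rw [← hk, succ_nsmul']
      exact add_mem_add hx hy
  have hg : g ∈ AddAction.stabilizer G (k • D) :=
    (AddSubgroup.closure_le _).2 hD (hgen ▸ AddSubgroup.mem_top g)
  have hzero : (0 : G) ∈ k • D := by
    simpa using nsmul_subset_nsmul_right h0 k.zero_le (by simp : (0 : G) ∈ 0 • D)
  simpa using AddAction.mem_stabilizer_finset'.1 hg hzero

-- If `z ∈ (m + 2) • D` but `z ∉ (m + 1) • D`, the translate `z + U` misses `m • D + U`.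
theorem card_nsmul_sub_add_growth {U : Finset G} (hU : U.Nonempty)
    (hgen : AddSubgroup.closure ((U - U : Finset G) : Set G) = ⊤) {m : ℕ} {g : G}
    (hg : g ∉ (m + 2) • (U - U)) :
    #(m • (U - U) + U) + #U ≤ #((m + 2) • (U - U) + U) := by
  have h0 : (0 : G) ∈ U - U := zero_mem_sub_iff.2 (by simpa using hU.ne_empty)
  have hmono : ∀ {k l : ℕ}, k ≤ l → k • (U - U) ⊆ l • (U - U) := nsmul_subset_nsmul_right h0
  obtain ⟨z, hz, hz'⟩ : ∃ z ∈ (m + 2) • (U - U), z ∉ (m + 1) • (U - U) := by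
    by_contra! h
    exact hg (hmono (Nat.le_succ _)
      (mem_nsmul_of_succ_nsmul_eq h0 hgen (Subset.antisymm h (hmono (Nat.le_succ _))) g))
  have hdisj : Disjoint (m • (U - U) + U) (z +ᵥ U) := by
    rw [disjoint_left]
    intro x hx hx'
    obtain ⟨y, hy, u, hu, rfl⟩ := mem_add.1 hx
    obtain ⟨u', hu', h⟩ := mem_vadd_finset.1 hx'
    have hzy : z = y + (u - u') := by
      rw [← add_sub_assoc, ← h, vadd_eq_add, add_sub_cancel_right]
    exact hz' (hzy ▸ succ_nsmul (U - U) m ▸ add_mem_add hy (sub_mem_sub hu hu'))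
  have hsub : (m • (U - U) + U) ∪ (z +ᵥ U) ⊆ (m + 2) • (U - U) + U := by
    refine union_subset (add_subset_add_right (hmono (by lia))) fun x hx => ?_
    obtain ⟨u, hu, rfl⟩ := mem_vadd_finset.1 hx
    exact add_mem_add hz hu
  simpa [card_union_of_disjoint hdisj] using card_le_card hsub

theorem mul_card_le_card_nsmul_sub_add {U : Finset G} (hU : U.Nonempty)
    (hgen : AddSubgroup.closure ((U - U : Finset G) : Set G) = ⊤) {g : G} (j : ℕ)
    (hg : g ∉ (2 * j) • (U - U)) : (j + 1) * #U ≤ #((2 * j) • (U - U) + U) := by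
  have h0 : (0 : G) ∈ U - U := zero_mem_sub_iff.2 (by simpa using hU.ne_empty)
  induction j with
  | zero => simp
  | succ j ih =>
    have hj := ih fun h => hg (nsmul_subset_nsmul_right h0 (by lia) h)
    calc (j + 1 + 1) * #U = (j + 1) * #U + #U := by ring
      _ ≤ #((2 * j) • (U - U) + U) + #U := by gcongr
      _ ≤ #((2 * (j + 1)) • (U - U) + U) := card_nsmul_sub_add_growth hU hgen hg

theorem mem_nsmul_sub_of_card_le [Fintype G] {U : Finset G} (hU : U.Nonempty)
    (hgen : AddSubgroup.closure ((U - U : Finset G) : Set G) = ⊤) {K : ℕ}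
    (hK : Fintype.card G ≤ K * #U) (g : G) : g ∈ (2 * K) • (U - U) := by
  by_contra hg
  have hlarge := (mul_card_le_card_nsmul_sub_add hU hgen K hg).trans (card_le_univ _)
  have hpos := hU.card_pos
  lia

end Sumset

section ShortRepresentation

variable {ι : Type*} [Fintype ι]

/-- A primitive integer vector, i.e. one with coprime coordinates, in the form given by Bézout's
identity. -/
def IsPrimitiveVec (a : ι → ℤ) : Prop := ∃ c : ι → ℤ, c ⬝ᵥ a = 1

/-- The hyperplane orthogonal to `a` contains no nonzero integer vector of sup norm at most `X`. -/
def NoShortRelation (a : ι → ℤ) (X : ℕ) : Prop :=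
  ∀ x : ι → ℤ, a ⬝ᵥ x = 0 → (∀ i, |x i| ≤ X) → x = 0

/-- Every integer in the range of `x => a ⬝ᵥ x` on the cube `[-1, 1] ^ ι` is already the value of an
integer vector of sup norm at most `L`. -/
def HasShortReps (a : ι → ℤ) (L : ℕ) : Prop :=
  ∀ k : ℤ, |k| ≤ ∑ i, |a i| → ∃ w : ι → ℤ, a ⬝ᵥ w = k ∧ ∀ i, |w i| ≤ L

theorem IsPrimitiveVec.ne_zero {a : ι → ℤ} (ha : IsPrimitiveVec a) : a ≠ 0 := by
  rintro rfl
  obtain ⟨c, hc⟩ := ha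
  simp at hc

theorem exists_eq_smul_isPrimitiveVec {x : ι → ℤ} (hx : x ≠ 0) :
    ∃ (g : ℤ) (y : ι → ℤ), 0 < g ∧ IsPrimitiveVec y ∧ x = g • y := by
  obtain ⟨g, hg⟩ := (IsPrincipalIdealRing.principal (Ideal.span (Set.range x))).principal
  have hdvd : ∀ i, g ∣ x i := fun i =>
    Ideal.mem_span_singleton.1 (hg.le (Ideal.subset_span (Set.mem_range_self i)))
  obtain ⟨c, hc⟩ := (Submodule.mem_span_range_iff_exists_fun ℤ).1
    (hg.ge (Submodule.mem_span_singleton_self g))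
  choose y hy using hdvd
  have hxy : x = g • y := funext hy
  have hg0 : g ≠ 0 := by
    rintro rfl
    exact hx (by rw [hxy, zero_smul])
  have hcy : c ⬝ᵥ y = 1 := by
    have hgc : g * (c ⬝ᵥ y) = g * 1 := by
      rw [← smul_eq_mul, ← dotProduct_smul, ← hxy, mul_one]
      exact hc
    exact mul_left_cancel₀ hg0 hgc
  rcases hg0.lt_or_gt with hneg | hpos
  · exact ⟨-g, -y, by lia, ⟨-c, by simpa using hcy⟩, by rw [smul_neg, neg_smul, neg_neg, hxy]⟩
  · exact ⟨g, y, hpos, ⟨c, hcy⟩, hxy⟩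

theorem abs_dotProduct_le {a z : ι → ℤ} {q t : ℤ} (ha : ∀ i, |a i| ≤ q) (hz : ∀ i, |z i| ≤ t) :
    |a ⬝ᵥ z| ≤ q * (Fintype.card ι * t) := by
  calc |a ⬝ᵥ z| ≤ ∑ i, |a i * z i| := abs_sum_le_sum_abs _ _
    _ ≤ ∑ _i : ι, q * t := by
      refine sum_le_sum fun i _ => ?_
      rw [abs_mul]
      exact mul_le_mul (ha i) (hz i) (abs_nonneg _) ((abs_nonneg _).trans (ha i))
    _ = q * (Fintype.card ι * t) := by
      simp only [sum_const, card_univ, nsmul_eq_mul]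
      ring

theorem exists_dotProduct_eq_of_dvd {a z : ι → ℤ} {i₀ : ι} {k κ t : ℤ}
    (hmax : ∀ i, |a i| ≤ |a i₀|) (h0 : a i₀ ≠ 0) (hz0 : z i₀ = 0) (hz : ∀ i, |z i| ≤ t)
    (hk : |k| ≤ |a i₀| * κ) (hdvd : a i₀ ∣ a ⬝ᵥ z - k) :
    ∃ w : ι → ℤ, a ⬝ᵥ w = k ∧ (∀ i ≠ i₀, w i = z i) ∧ |w i₀| ≤ Fintype.card ι * t + κ := by
  classical
  obtain ⟨m, hm⟩ := hdvd
  refine ⟨z - Pi.single i₀ m, ?_, fun i hi => by simp [hi], ?_⟩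
  · rw [dotProduct_sub, dotProduct_single]
    linarith
  · have hqm : |a i₀| * |m| ≤ |a i₀| * (Fintype.card ι * t + κ) := by
      calc |a i₀| * |m| = |a ⬝ᵥ z - k| := by rw [hm, abs_mul]
        _ ≤ |a ⬝ᵥ z| + |k| := abs_sub _ _
        _ ≤ |a i₀| * (Fintype.card ι * t) + |a i₀| * κ := add_le_add (abs_dotProduct_le hmax hz) hk
        _ = |a i₀| * (Fintype.card ι * t + κ) := by ring
    simpa [hz0] using le_of_mul_le_mul_left hqm (abs_pos.2 h0)

theorem card_piFinset_ite_eq [DecidableEq ι] (i₀ : ι) (s t : Finset ℤ) :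
    #(Fintype.piFinset fun i => if i = i₀ then s else t) = #s * #t ^ (Fintype.card ι - 1) := by
  rw [Fintype.card_piFinset, ← mul_prod_erase _ _ (mem_univ i₀), if_pos rfl,
    prod_congr rfl fun i hi => by rw [if_neg (ne_of_mem_erase hi)], prod_const,
    card_erase_of_mem (mem_univ i₀), card_univ]

/-- The integer points of the cube `[0, s] ^ ι` with vanishing coordinate `i₀`. -/
noncomputable def cubeFace [DecidableEq ι] (i₀ : ι) (s : ℕ) : Finset (ι → ℤ) :=
  Fintype.piFinset fun i => if i = i₀ then {0} else Icc 0 (s : ℤ)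

/-- The linear form `x => a ⬝ᵥ x` modulo the coordinate `a i₀`. -/
def residueHom (a : ι → ℤ) (i₀ : ι) : (ι → ℤ) →+ ZMod (a i₀).natAbs :=
  AddMonoidHom.mk' (fun x => ((a ⬝ᵥ x : ℤ) : ZMod (a i₀).natAbs)) fun x y => by
    rw [dotProduct_add, Int.cast_add]

theorem residueHom_eq_intCast_iff {a x : ι → ℤ} {i₀ : ι} {k : ℤ} :
    residueHom a i₀ x = (k : ZMod (a i₀).natAbs) ↔ a i₀ ∣ a ⬝ᵥ x - k := by
  change ((a ⬝ᵥ x : ℤ) : ZMod (a i₀).natAbs) = k ↔ _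
  rw [← sub_eq_zero, ← Int.cast_sub, ZMod.intCast_zmod_eq_zero_iff_dvd, Int.natAbs_dvd]

variable {a : ι → ℤ} {s : ℕ}

section CubeFace

variable [DecidableEq ι] {i₀ : ι}

theorem apply_eq_zero_of_mem_cubeFace {x : ι → ℤ} (hx : x ∈ cubeFace i₀ s) : x i₀ = 0 := by
  simpa using Fintype.mem_piFinset.1 hx i₀

theorem apply_mem_Icc_of_mem_cubeFace {x : ι → ℤ} (hx : x ∈ cubeFace i₀ s) (i : ι) :
    0 ≤ x i ∧ x i ≤ s := by
  have hi := Fintype.mem_piFinset.1 hx i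
  split_ifs at hi with h
  · rw [mem_singleton] at hi
    lia
  · exact mem_Icc.1 hi

theorem zero_mem_cubeFace : (0 : ι → ℤ) ∈ cubeFace i₀ s :=
  Fintype.mem_piFinset.2 fun i => by split_ifs <;> simp

theorem single_mem_cubeFace (hs : 1 ≤ s) {i : ι} (hi : i ≠ i₀) :
    Pi.single i 1 ∈ cubeFace i₀ s := by
  refine Fintype.mem_piFinset.2 fun j => ?_
  rcases eq_or_ne j i with rfl | hj
  · simpa [hi] using hs
  · split_ifs <;> simp [hj]

theorem card_cubeFace : #(cubeFace i₀ s) = (s + 1) ^ (Fintype.card ι - 1) := by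
  rw [cubeFace, card_piFinset_ite_eq]
  simp

theorem abs_le_of_mem_nsmul_cubeFace_sub {m : ℕ} {z : ι → ℤ}
    (hz : z ∈ m • (cubeFace i₀ s - cubeFace i₀ s)) : z i₀ = 0 ∧ ∀ i, |z i| ≤ (m * s : ℕ) := by
  induction m generalizing z with
  | zero => simp_all
  | succ m ih =>
    rw [succ_nsmul] at hz
    obtain ⟨z, hz', _, hxy, rfl⟩ := mem_add.1 hz
    obtain ⟨x, hx, y, hy, rfl⟩ := mem_sub.1 hxy
    refine ⟨?_, fun i => ?_⟩
    · simp [(ih hz').1, apply_eq_zero_of_mem_cubeFace hx, apply_eq_zero_of_mem_cubeFace hy]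
    · have hzi := (ih hz').2 i
      have hxi := apply_mem_Icc_of_mem_cubeFace hx i
      have hyi := apply_mem_Icc_of_mem_cubeFace hy i
      rw [abs_le] at hzi ⊢
      push_cast [Pi.add_apply, Pi.sub_apply, add_mul] at hzi ⊢
      lia

theorem NoShortRelation.injOn_residueHom [Nonempty ι] (hmax : ∀ i, |a i| ≤ |a i₀|) (h0 : a i₀ ≠ 0)
    (ha : NoShortRelation a (Fintype.card ι * s)) :
    Set.InjOn (residueHom a i₀) (cubeFace i₀ s) := by
  intro x hx y hy hxy
  have hz := abs_le_of_mem_nsmul_cubeFace_sub (m := 1)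
    ((one_nsmul (cubeFace i₀ s - cubeFace i₀ s)).symm ▸ sub_mem_sub hx hy)
  have hdvd : a i₀ ∣ a ⬝ᵥ (x - y) - 0 := residueHom_eq_intCast_iff.1 (by simp [hxy])
  obtain ⟨w, hw, hwz, hw0⟩ :=
    exists_dotProduct_eq_of_dvd (κ := 0) hmax h0 hz.1 hz.2 (by simp) hdvd
  have hcard : 1 * s ≤ Fintype.card ι * s := Nat.mul_le_mul_right s Fintype.card_pos
  have hwzero : w = 0 := ha w hw fun i => by
    rcases eq_or_ne i i₀ with rfl | hi
    · simpa using hw0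
    · rw [hwz i hi]
      exact (hz.2 i).trans (by exact_mod_cast hcard)
  refine sub_eq_zero.1 (funext fun i => ?_)
  rcases eq_or_ne i i₀ with rfl | hi
  · exact hz.1
  · simp [← hwz i hi, hwzero]

theorem IsPrimitiveVec.closure_image_residueHom_sub_eq_top (ha : IsPrimitiveVec a) (hs : 1 ≤ s) :
    AddSubgroup.closure (((cubeFace i₀ s).image (residueHom a i₀) -
      (cubeFace i₀ s).image (residueHom a i₀) : Finset (ZMod (a i₀).natAbs)) :
        Set (ZMod (a i₀).natAbs)) = ⊤ := by
  set H := AddSubgroup.closure (((cubeFace i₀ s).image (residueHom a i₀) -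
    (cubeFace i₀ s).image (residueHom a i₀) : Finset (ZMod (a i₀).natAbs)) :
      Set (ZMod (a i₀).natAbs))
  have hsingle : ∀ i, residueHom a i₀ (Pi.single i 1) ∈ H := fun i => by
    rcases eq_or_ne i i₀ with rfl | hi
    · have hzero : residueHom a i (Pi.single i 1) = ((0 : ℤ) : ZMod _) :=
        residueHom_eq_intCast_iff.2 (by simp)
      rw [hzero, Int.cast_zero]
      exact H.zero_mem
    · refine AddSubgroup.subset_closure (mem_coe.2 (mem_sub.2 ⟨_, mem_image_of_mem _
        (single_mem_cubeFace hs hi), 0, mem_image.2 ⟨0, zero_mem_cubeFace, map_zero _⟩,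
        sub_zero _⟩))
  have hrange : ∀ x, residueHom a i₀ x ∈ H := fun x => by
    rw [← univ_sum_single x, map_sum]
    refine H.sum_mem fun i _ => ?_
    have hsmul : Pi.single i (x i) = x i • (Pi.single i 1 : ι → ℤ) := by simp [← Pi.single_smul]
    rw [hsmul, map_zsmul]
    exact H.zsmul_mem (hsingle i) _
  obtain ⟨c, hc⟩ := ha
  refine (AddSubgroup.eq_top_iff' H).2 fun g => ?_
  obtain ⟨k, rfl⟩ := ZMod.intCast_surjective g
  have hk : residueHom a i₀ (k • c) = k := residueHom_eq_intCast_iff.2 (by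
    rw [dotProduct_smul, dotProduct_comm, hc, smul_eq_mul, mul_one, sub_self]
    exact dvd_zero _)
  exact hk ▸ hrange _

theorem IsPrimitiveVec.exists_mem_nsmul_cubeFace_dvd [Nonempty ι] {K : ℕ} (ha : IsPrimitiveVec a)
    (hs : 1 ≤ s) (hshort : NoShortRelation a (Fintype.card ι * s)) (hmax : ∀ i, |a i| ≤ |a i₀|)
    (h0 : a i₀ ≠ 0) (hK : |a i₀| ≤ (K * (s + 1) ^ (Fintype.card ι - 1) : ℕ)) (k : ℤ) :
    ∃ z ∈ (2 * K) • (cubeFace i₀ s - cubeFace i₀ s), a i₀ ∣ a ⬝ᵥ z - k := by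
  have : NeZero (a i₀).natAbs := ⟨Int.natAbs_ne_zero.2 h0⟩
  have hcard : Fintype.card (ZMod (a i₀).natAbs) ≤
      K * #((cubeFace i₀ s).image (residueHom a i₀)) := by
    rw [card_image_of_injOn (hshort.injOn_residueHom hmax h0), card_cubeFace, ZMod.card]
    rwa [Int.abs_eq_natAbs, Nat.cast_le] at hK
  have hcover := mem_nsmul_sub_of_card_le (Nonempty.image ⟨0, zero_mem_cubeFace⟩ _)
    (ha.closure_image_residueHom_sub_eq_top hs) hcard (k : ZMod (a i₀).natAbs)
  have himage : (cubeFace i₀ s - cubeFace i₀ s).image (residueHom a i₀) =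
      (cubeFace i₀ s).image (residueHom a i₀) - (cubeFace i₀ s).image (residueHom a i₀) :=
    image_image₂_distrib (map_sub _)
  rw [← himage, ← image_nsmul] at hcover
  obtain ⟨z, hz, hzk⟩ := mem_image.1 hcover
  exact ⟨z, hz, residueHom_eq_intCast_iff.1 hzk⟩

end CubeFace

-- The residues of `cubeFace i₀ s` modulo `a i₀` are distinct because `a` has no short relation, so
-- they have density at least `1 / K`, and `2 * K` of their differences reach any residue.
theorem IsPrimitiveVec.hasShortReps {K : ℕ} (hprim : IsPrimitiveVec a) (hs : 1 ≤ s)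
    (hshort : NoShortRelation a (Fintype.card ι * s))
    (hK : ∀ i, |a i| ≤ (K * (s + 1) ^ (Fintype.card ι - 1) : ℕ)) :
    HasShortReps a (Fintype.card ι * (2 * K + 1) * s) := by
  classical
  obtain ⟨j, hj⟩ := Function.ne_iff.1 hprim.ne_zero
  have : Nonempty ι := ⟨j⟩
  obtain ⟨i₀, hmax⟩ := Finite.exists_max fun i => |a i|
  have h0 : a i₀ ≠ 0 := abs_pos.1 ((abs_pos.2 hj).trans_le (hmax j))
  intro k hk
  obtain ⟨z, hz, hdvd⟩ := hprim.exists_mem_nsmul_cubeFace_dvd hs hshort hmax h0 (hK i₀) k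
  obtain ⟨hz0, hzle⟩ := abs_le_of_mem_nsmul_cubeFace_sub hz
  have hk' : |k| ≤ |a i₀| * Fintype.card ι :=
    hk.trans ((sum_le_card_nsmul _ _ _ fun i _ => hmax i).trans_eq (by simp [mul_comm]))
  obtain ⟨w, hw, hwz, hw0⟩ := exists_dotProduct_eq_of_dvd hmax h0 hz0 hzle hk' hdvd
  have hbound : Fintype.card ι * (2 * K * s) + Fintype.card ι ≤
      Fintype.card ι * (2 * K + 1) * s := by
    have := Nat.mul_le_mul_left (Fintype.card ι) hs
    linarith
  refine ⟨w, hw, fun i => ?_⟩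
  rcases eq_or_ne i i₀ with rfl | hi
  · exact hw0.trans (by exact_mod_cast hbound)
  · rw [hwz i hi]
    have hcard : 2 * K * s ≤ Fintype.card ι * (2 * K * s) :=
      Nat.le_mul_of_pos_left _ Fintype.card_pos
    exact (hzle i).trans (by exact_mod_cast (by lia))

end ShortRepresentation

section SupportVertex

variable {ι : Type*} [Fintype ι] {a b : ι → ℤ} {L r : ℕ}

/-- The Euclidean length of an integer vector. -/
noncomputable def euclideanLength (a : ι → ℤ) : ℝ := √(realVec a ⬝ᵥ realVec a)

theorem dotProduct_self_nonneg (u : ι → ℝ) : 0 ≤ u ⬝ᵥ u :=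
  sum_nonneg fun _ _ => mul_self_nonneg _

theorem dotProduct_self_le {u : ι → ℝ} {t : ℝ} (hu : ∀ i, |u i| ≤ t) :
    u ⬝ᵥ u ≤ Fintype.card ι * t ^ 2 := by
  calc u ⬝ᵥ u ≤ ∑ _i : ι, t ^ 2 := sum_le_sum fun i _ => by
        rw [← sq, ← sq_abs]
        exact pow_le_pow_left₀ (abs_nonneg _) (hu i) 2
    _ = Fintype.card ι * t ^ 2 := by simp

theorem euclideanLength_sq (a : ι → ℤ) : euclideanLength a ^ 2 = realVec a ⬝ᵥ realVec a :=
  Real.sq_sqrt (dotProduct_self_nonneg _)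

theorem one_le_euclideanLength (ha : a ≠ 0) : 1 ≤ euclideanLength a := by
  rw [euclideanLength, Real.one_le_sqrt, realVec_dotProduct]
  have hpos : 0 < a ⬝ᵥ a := (sum_nonneg fun _ _ => mul_self_nonneg _).lt_of_ne'
    (mt dotProduct_self_eq_zero.1 ha)
  exact_mod_cast hpos

theorem euclideanLength_le {A : ℕ} (ha : ∀ i, |a i| ≤ A) :
    euclideanLength a ≤ Fintype.card ι * A := by
  have hle : realVec a ⬝ᵥ realVec a ≤ Fintype.card ι * (A : ℝ) ^ 2 :=
    dotProduct_self_le fun i => by rw [realVec_apply]; exact_mod_cast ha i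
  refine Real.sqrt_le_iff.2 ⟨by positivity, hle.trans ?_⟩
  have hcard : (Fintype.card ι : ℝ) ≤ (Fintype.card ι : ℝ) ^ 2 := by
    exact_mod_cast Nat.le_self_pow two_ne_zero _
  rw [mul_pow]
  gcongr

theorem HasShortReps.exists_near {k : ℤ} {y : ι → ℝ} (ha : HasShortReps a L)
    (hy : realVec a ⬝ᵥ y = k) :
    ∃ x : ι → ℤ, a ⬝ᵥ x = k ∧ ∀ i, |(realVec x - y) i| ≤ L + 1 := by
  set z : ι → ℤ := fun i => ⌊y i⌋
  have hfract : ∀ i, |y i - z i| ≤ 1 := fun i => by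
    rw [Int.self_sub_floor, Int.abs_fract]
    exact (Int.fract_lt_one _).le
  have hkz : ((k - a ⬝ᵥ z : ℤ) : ℝ) = ∑ i, a i * (y i - z i) := by
    rw [Int.cast_sub, ← realVec_dotProduct, ← hy, ← dotProduct_sub]
    rfl
  have hrest : |((k - a ⬝ᵥ z : ℤ) : ℝ)| ≤ ∑ i, |(a i : ℝ)| := by
    rw [hkz]
    refine (abs_sum_le_sum_abs _ _).trans (sum_le_sum fun i _ => ?_)
    rw [abs_mul]
    exact mul_le_of_le_one_right (abs_nonneg _) (hfract i)
  obtain ⟨w, hw, hwL⟩ := ha (k - a ⬝ᵥ z) (by exact_mod_cast hrest)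
  refine ⟨z + w, by rw [dotProduct_add, hw, add_sub_cancel], fun i => ?_⟩
  have hwL' : |(w i : ℝ)| ≤ L := by exact_mod_cast hwL i
  calc |(realVec (z + w) - y) i| = |w i - (y i - z i)| := by
        simp only [Pi.sub_apply, Pi.add_apply, realVec_apply, Int.cast_add]
        ring_nf
    _ ≤ |(w i : ℝ)| + |y i - z i| := abs_sub _ _
    _ ≤ L + 1 := add_le_add hwL' (hfract i)

theorem dotProduct_self_eq_add {u x : ι → ℝ} {α k : ℝ} (hα : α ≠ 0) (hu : u ⬝ᵥ u = α ^ 2)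
    (hx : u ⬝ᵥ x = k) :
    x ⬝ᵥ x = (k / α) ^ 2 + (x - (k / α ^ 2) • u) ⬝ᵥ (x - (k / α ^ 2) • u) := by
  simp only [sub_dotProduct, dotProduct_sub, smul_dotProduct, dotProduct_smul, hu, hx,
    dotProduct_comm x u, smul_eq_mul]
  field_simp
  ring

-- The hyperplane `a ⬝ᵥ x = k` with `k = ⌊r ‖a‖⌋ - 1` meets the ball of radius `r` in a ball large
-- enough to contain a lattice point of the hyperplane.
theorem HasShortReps.exists_mem_latticeBall (ha : HasShortReps a L) (ha0 : a ≠ 0)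
    (hr : euclideanLength a * (1 + Fintype.card ι * (L + 1) ^ 2) ≤ 2 * r) :
    ∃ x ∈ latticeBall ι r, r * euclideanLength a - 2 ≤ realVec a ⬝ᵥ realVec x := by
  set α := euclideanLength a
  have hα1 : 1 ≤ α := one_le_euclideanLength ha0
  have hα0 : α ≠ 0 := by positivity
  have hdL : (0 : ℝ) ≤ Fintype.card ι * (L + 1) ^ 2 := by positivity
  have hr1 : (1 : ℝ) ≤ r := Nat.one_le_cast.2 (Nat.one_le_iff_ne_zero.2 fun h => by
    rw [h, Nat.cast_zero] at hr
    nlinarith)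
  set k : ℤ := ⌊r * α⌋ - 1 with hk
  have hk_le : (k : ℝ) ≤ r * α - 1 := by
    rw [hk, Int.cast_sub, Int.cast_one]
    linarith [Int.floor_le (r * α)]
  have hle_k : r * α - 2 ≤ k := by
    rw [hk, Int.cast_sub, Int.cast_one]
    linarith [Int.lt_floor_add_one (r * α)]
  have hk0 : (0 : ℝ) ≤ k := by
    have : (1 : ℤ) ≤ ⌊r * α⌋ :=
      Int.le_floor.2 (by simpa using one_le_mul_of_one_le_of_one_le hr1 hα1)
    exact_mod_cast sub_nonneg.2 this
  have hself : realVec a ⬝ᵥ realVec a = α ^ 2 := (euclideanLength_sq a).symm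
  obtain ⟨x, hx, hxL⟩ := ha.exists_near (k := k) (y := (k / α ^ 2) • realVec a) (by
    rw [dotProduct_smul, hself, smul_eq_mul, div_mul_cancel₀ _ (pow_ne_zero 2 hα0)])
  have hax : realVec a ⬝ᵥ realVec x = k := by rw [realVec_dotProduct, hx]
  have hnorm : realVec x ⬝ᵥ realVec x ≤ (r : ℝ) ^ 2 := by
    calc realVec x ⬝ᵥ realVec x
        ≤ ((r * α - 1) / α) ^ 2 + Fintype.card ι * (L + 1) ^ 2 := by
          rw [dotProduct_self_eq_add hα0 hself hax]
          gcongr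
          exact dotProduct_self_le hxL
      _ = r ^ 2 - (α * (2 * r - α * (1 + Fintype.card ι * (L + 1) ^ 2)) + (α ^ 2 - 1)) / α ^ 2 := by
          field_simp
          ring
      _ ≤ r ^ 2 := sub_le_self _ (div_nonneg (add_nonneg (mul_nonneg (by positivity)
          (sub_nonneg.2 hr)) (sub_nonneg.2 (one_le_pow₀ hα1))) (by positivity))
  rw [realVec_dotProduct] at hnorm
  exact ⟨x, by exact_mod_cast hnorm, by rwa [hax]⟩

theorem HasShortReps.exists_mem_hullVertices (ha : HasShortReps a L) (ha0 : a ≠ 0)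
    (hr : euclideanLength a * (1 + Fintype.card ι * (L + 1) ^ 2) ≤ 2 * r) :
    ∃ v ∈ hullVertices (latticeBall ι r),
      r * euclideanLength a - 2 ≤ realVec a ⬝ᵥ realVec v := by
  obtain ⟨x, hx, hxa⟩ := ha.exists_mem_latticeBall ha0 hr
  obtain ⟨v, hv, hmax⟩ := exists_mem_hullVertices_forall_dotProduct_le latticeBall_finite ⟨x, hx⟩ a
  refine ⟨v, hv, hxa.trans ?_⟩
  rw [realVec_dotProduct, realVec_dotProduct]
  exact_mod_cast hmax x hx

end SupportVertex

section Separation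

variable {ι : Type*} [Fintype ι]

theorem dotProduct_self_sub_smul_le {u v : ι → ℝ} {α r : ℝ} (hr : 0 < r) (hα : 0 ≤ α)
    (hu : u ⬝ᵥ u = α ^ 2) (hv : v ⬝ᵥ v ≤ r ^ 2) (huv : r * α - 2 ≤ u ⬝ᵥ v) :
    (u - (α / r) • v) ⬝ᵥ (u - (α / r) • v) ≤ 4 * α / r := by
  calc (u - (α / r) • v) ⬝ᵥ (u - (α / r) • v)
      = α ^ 2 - 2 * (α / r) * (u ⬝ᵥ v) + (α / r) ^ 2 * (v ⬝ᵥ v) := by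
        simp only [sub_dotProduct, dotProduct_sub, smul_dotProduct, dotProduct_smul, hu,
          dotProduct_comm v u, smul_eq_mul]
        ring
    _ ≤ α ^ 2 - 2 * (α / r) * (r * α - 2) + (α / r) ^ 2 * r ^ 2 := by gcongr
    _ = 4 * α / r := by
        field_simp
        ring

theorem dotProduct_self_sub_le (x y : ι → ℝ) :
    (x - y) ⬝ᵥ (x - y) ≤ 2 * (x ⬝ᵥ x) + 2 * (y ⬝ᵥ y) := by
  have hparallelogram : (x - y) ⬝ᵥ (x - y) + (x + y) ⬝ᵥ (x + y) = 2 * (x ⬝ᵥ x) + 2 * (y ⬝ᵥ y) := by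
    simp only [sub_dotProduct, dotProduct_sub, add_dotProduct, dotProduct_add]
    ring
  linarith [dotProduct_self_nonneg (x + y)]

theorem dotProduct_self_sub_smul_le_of_le {u u' v : ι → ℝ} {α β r : ℝ} (hr : 0 < r) (hβ : 0 < β)
    (hβα : β ≤ α) (hu : u ⬝ᵥ u = α ^ 2) (hu' : u' ⬝ᵥ u' = β ^ 2) (hv : v ⬝ᵥ v ≤ r ^ 2)
    (huv : r * α - 2 ≤ u ⬝ᵥ v) (huv' : r * β - 2 ≤ u' ⬝ᵥ v) :
    (u' - (β / α) • u) ⬝ᵥ (u' - (β / α) • u) ≤ 16 * α / r := by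
  have hα : 0 < α := hβ.trans_le hβα
  have hdecomp : u' - (β / α) • u = (u' - (β / r) • v) - (β / α) • (u - (α / r) • v) := by
    rw [smul_sub, smul_smul, div_mul_div_cancel₀ hα.ne']
    abel
  calc (u' - (β / α) • u) ⬝ᵥ (u' - (β / α) • u)
      ≤ 2 * (4 * β / r) + 2 * ((β / α) ^ 2 * (4 * α / r)) := by
        rw [hdecomp]
        refine (dotProduct_self_sub_le _ _).trans ?_
        rw [smul_dotProduct, dotProduct_smul, smul_smul, ← sq, smul_eq_mul]
        gcongr
        · exact dotProduct_self_sub_smul_le hr hβ.le hu' hv huv'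
        · exact dotProduct_self_sub_smul_le hr hα.le hu hv huv
    _ ≤ 2 * (4 * α / r) + 2 * (1 ^ 2 * (4 * α / r)) := by
        gcongr
        exact (div_le_one hα).2 hβα
    _ = 16 * α / r := by ring

variable {a b : ι → ℤ} {L r : ℕ}

-- `b` differs from a multiple of `a` by a vector of length at most `4 √(‖a‖ / r)`, so on short
-- vectors orthogonal to `a` the integer `b ⬝ᵥ x` is less than `1` in absolute value.
theorem dotProduct_eq_zero_of_common_vertex {v x : ι → ℤ} (hb : b ≠ 0)
    (hba : euclideanLength b ≤ euclideanLength a) (hv : v ∈ latticeBall ι r)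
    (hav : r * euclideanLength a - 2 ≤ realVec a ⬝ᵥ realVec v)
    (hbv : r * euclideanLength b - 2 ≤ realVec b ⬝ᵥ realVec v)
    (hr : 144 * Fintype.card ι * euclideanLength a * L ^ 2 < r)
    (hax : a ⬝ᵥ x = 0) (hx : ∀ i, |x i| ≤ 3 * L) : b ⬝ᵥ x = 0 := by
  set α := euclideanLength a
  set β := euclideanLength b
  have hβ : 0 < β := one_pos.trans_le (one_le_euclideanLength hb)
  have hα : 0 < α := hβ.trans_le hba
  have hr0 : (0 : ℝ) < r := lt_of_le_of_lt (by positivity) hr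
  set e := realVec b - (β / α) • realVec a
  have hv' : realVec v ⬝ᵥ realVec v ≤ (r : ℝ) ^ 2 := by
    rw [realVec_dotProduct]
    exact_mod_cast hv
  have he : e ⬝ᵥ e ≤ 16 * α / r := dotProduct_self_sub_smul_le_of_le hr0 hβ hba
    (euclideanLength_sq a).symm (euclideanLength_sq b).symm hv' hav hbv
  have hxx : realVec x ⬝ᵥ realVec x ≤ Fintype.card ι * (3 * L) ^ 2 :=
    dotProduct_self_le fun i => by rw [realVec_apply]; exact_mod_cast hx i
  have hbx : ((b ⬝ᵥ x : ℤ) : ℝ) = e ⬝ᵥ realVec x := by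
    rw [sub_dotProduct, smul_dotProduct, realVec_dotProduct, realVec_dotProduct, hax]
    simp
  have hsq : ((b ⬝ᵥ x : ℤ) : ℝ) ^ 2 < 1 := by
    calc ((b ⬝ᵥ x : ℤ) : ℝ) ^ 2 ≤ (e ⬝ᵥ e) * (realVec x ⬝ᵥ realVec x) := by
          rw [hbx]
          simpa only [dotProduct, sq] using sum_mul_sq_le_sq_mul_sq univ e (realVec x)
      _ ≤ 16 * α / r * (Fintype.card ι * (3 * L) ^ 2) := by
          gcongr
          exact dotProduct_self_nonneg _
      _ = 144 * Fintype.card ι * α * L ^ 2 / r := by ring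
      _ < 1 := (div_lt_one hr0).2 hr
  exact Int.abs_lt_one_iff.1 (sq_lt_one_iff_abs_lt_one _ |>.1 (by exact_mod_cast hsq))

theorem HasShortReps.dotProduct_eq_mul {w₁ : ι → ℤ} (ha : HasShortReps a L)
    (hab : ∀ x : ι → ℤ, a ⬝ᵥ x = 0 → (∀ i, |x i| ≤ 3 * L) → b ⬝ᵥ x = 0)
    (hw₁ : a ⬝ᵥ w₁ = 1) (hw₁L : ∀ i, |w₁ i| ≤ L) {k : ℕ} (hk : k ≤ ∑ i, |a i|) {w : ι → ℤ}
    (hw : a ⬝ᵥ w = k) (hwL : ∀ i, |w i| ≤ L) : b ⬝ᵥ w = k * (b ⬝ᵥ w₁) := by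
  induction k generalizing w with
  | zero => rw [hab w hw fun i => (hwL i).trans (by lia), Nat.cast_zero, zero_mul]
  | succ k ih =>
    obtain ⟨w', hw', hwL'⟩ := ha k (by rw [Nat.abs_cast]; lia)
    have hzero := hab (w - w' - w₁)
      (by rw [dotProduct_sub, dotProduct_sub, hw, hw', hw₁]; lia) fun i => by
        have := abs_sub (w i - w' i) (w₁ i)
        have := abs_sub (w i) (w' i)
        simp only [Pi.sub_apply]
        linarith [hwL i, hwL' i, hw₁L i]
    rw [dotProduct_sub, dotProduct_sub, ih (by lia) hw' hwL'] at hzero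
    push_cast
    linarith

theorem HasShortReps.exists_eq_smul (ha : HasShortReps a L) (hL : 1 ≤ L) (ha0 : a ≠ 0)
    (hab : ∀ x : ι → ℤ, a ⬝ᵥ x = 0 → (∀ i, |x i| ≤ 3 * L) → b ⬝ᵥ x = 0) :
    ∃ m : ℤ, b = m • a := by
  classical
  have hle_sum (i : ι) : |a i| ≤ ∑ j, |a j| :=
    single_le_sum (f := fun j => |a j|) (fun j _ => abs_nonneg _) (mem_univ i)
  obtain ⟨i₀, hi₀⟩ := Function.ne_iff.1 ha0
  obtain ⟨w₁, hw₁, hw₁L⟩ := ha 1 (by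
    rw [abs_one]
    exact (Int.one_le_abs hi₀).trans (hle_sum i₀))
  refine ⟨b ⬝ᵥ w₁, funext fun i => ?_⟩
  obtain ⟨w, hw, hwL⟩ := ha (a i).natAbs (by simpa using hle_sum i)
  have hbw : b ⬝ᵥ w = (a i).natAbs * (b ⬝ᵥ w₁) :=
    ha.dotProduct_eq_mul hab hw₁ hw₁L (by simpa using hle_sum i) hw hwL
  have hzero : b ⬝ᵥ (Pi.single i 1 - (a i).sign • w) = 0 := by
    refine hab _ ?_ fun j => ?_
    · rw [dotProduct_sub, dotProduct_smul, hw, dotProduct_single, smul_eq_mul,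
        Int.sign_mul_natAbs, mul_one, sub_self]
    · have hsingle : |(Pi.single i 1 : ι → ℤ) j| ≤ 1 := by
        rw [Pi.single_apply]
        split <;> simp
      have hsign : |(a i).sign * w j| ≤ L := by
        rcases Int.sign_trichotomy (a i) with h | h | h <;> simp [h, hwL j]
      have := abs_sub ((Pi.single i 1 : ι → ℤ) j) ((a i).sign * w j)
      simp only [Pi.sub_apply, Pi.smul_apply, smul_eq_mul]
      lia
  rw [dotProduct_sub, dotProduct_smul, hbw, dotProduct_single, smul_eq_mul, ← mul_assoc,
    Int.sign_mul_natAbs, mul_one] at hzero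
  rw [Pi.smul_apply, smul_eq_mul]
  linarith

theorem IsPrimitiveVec.eq_of_eq_smul {m : ℤ} (hb : IsPrimitiveVec b)
    (ha0 : ∀ i, 0 < a i) (hb0 : ∀ i, 0 < b i) (hm : b = m • a) : a = b := by
  obtain ⟨i, -⟩ := Function.ne_iff.1 hb.ne_zero
  obtain ⟨c, hc⟩ := hb
  have hm0 : 0 ≤ m := by
    have hi := hb0 i
    rw [hm, Pi.smul_apply, smul_eq_mul] at hi
    exact (pos_of_mul_pos_left hi (ha0 i).le).le
  have hm1 : m = 1 := Int.eq_one_of_dvd_one hm0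
    ⟨c ⬝ᵥ a, by rw [← hc, hm, dotProduct_smul, smul_eq_mul]⟩
  rw [hm, hm1, one_smul]

theorem eq_of_common_vertex {v : ι → ℤ} {A : ℕ} (hL : 1 ≤ L)
    (hr : 144 * (Fintype.card ι) ^ 2 * A * L ^ 2 < r) (hv : v ∈ latticeBall ι r)
    (haA : ∀ i, 1 ≤ a i ∧ a i ≤ A) (hbA : ∀ i, 1 ≤ b i ∧ b i ≤ A)
    (hap : IsPrimitiveVec a) (hbp : IsPrimitiveVec b)
    (ha : HasShortReps a L) (hb : HasShortReps b L)
    (hav : r * euclideanLength a - 2 ≤ realVec a ⬝ᵥ realVec v)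
    (hbv : r * euclideanLength b - 2 ≤ realVec b ⬝ᵥ realVec v) : a = b := by
  wlog hba : euclideanLength b ≤ euclideanLength a generalizing a b
  · exact (this hbA haA hbp hap hb ha hbv hav (le_of_not_ge hba)).symm
  have haA' (i : ι) : 0 < a i ∧ |a i| ≤ A := by
    have hpos : 0 < a i := one_pos.trans_le (haA i).1
    exact ⟨hpos, (abs_of_pos hpos).trans_le (haA i).2⟩
  have hr' : 144 * Fintype.card ι * euclideanLength a * L ^ 2 < r := by
    calc 144 * Fintype.card ι * euclideanLength a * (L : ℝ) ^ 2
        ≤ 144 * Fintype.card ι * (Fintype.card ι * A) * L ^ 2 := by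
          gcongr
          exact euclideanLength_le fun i => (haA' i).2
      _ = ((144 * (Fintype.card ι) ^ 2 * A * L ^ 2 : ℕ) : ℝ) := by
          push_cast
          ring
      _ < r := Nat.cast_lt.2 hr
  obtain ⟨m, hm⟩ := ha.exists_eq_smul hL hap.ne_zero fun x hax hx =>
    dotProduct_eq_zero_of_common_vertex hbp.ne_zero hba hv hav hbv hr' hax hx
  exact hbp.eq_of_eq_smul (fun i => (haA' i).1) (fun i => one_pos.trans_le (hbA i).1) hm

end Separation

section Counting

variable {ι : Type*} [Fintype ι]

theorem eq_of_dotProduct_eq_zero_of_forall_ne {a b y : ι → ℤ} {j : ι} (hj0 : y j ≠ 0)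
    (ha : a ⬝ᵥ y = 0) (hb : b ⬝ᵥ y = 0) (hab : ∀ i ≠ j, a i = b i) : a = b := by
  have hdot : (a - b) ⬝ᵥ y = (a j - b j) * y j :=
    sum_eq_single j (fun i _ hi => by rw [Pi.sub_apply, hab i hi, sub_self, zero_mul]) (by simp)
  have hj : a j = b j := by
    rw [sub_dotProduct, ha, hb, sub_self, eq_comm, mul_eq_zero] at hdot
    exact sub_eq_zero.1 (hdot.resolve_right hj0)
  funext i
  by_cases hi : i = j
  · rw [hi, hj]
  · exact hab i hi

variable [DecidableEq ι] {A X k : ℕ}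

/-- The integer vectors with all coordinates between `1` and `A`. The lower bound is proved by
counting the vectors of this box that are primitive and have no short relation. -/
noncomputable def posBox (ι : Type*) [Fintype ι] [DecidableEq ι] (A : ℕ) : Finset (ι → ℤ) :=
  Fintype.piFinset fun _ => Icc 1 (A : ℤ)

theorem mem_posBox {a : ι → ℤ} : a ∈ posBox ι A ↔ ∀ i, 1 ≤ a i ∧ a i ≤ A := by
  simp only [posBox, Fintype.mem_piFinset, mem_Icc]

theorem card_posBox : #(posBox ι A) = A ^ Fintype.card ι := by
  simp [posBox, Fintype.card_piFinset]

theorem card_filter_dvd_posBox_le (hk : 0 < k) :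
    #{a ∈ posBox ι A | ∀ i, (k : ℤ) ∣ a i} ≤ (A / k) ^ Fintype.card ι := by
  have hk' : (0 : ℤ) < k := Nat.cast_pos.2 hk
  rw [← card_posBox]
  refine card_le_card_of_injOn (fun a i => a i / k) (fun a ha => ?_) fun a ha b hb hab => ?_
  · obtain ⟨hbox, hdvd⟩ := mem_filter.1 ha
    refine mem_coe.2 (mem_posBox.2 fun i => ?_)
    obtain ⟨hone, hle⟩ := mem_posBox.1 hbox i
    refine ⟨(Int.le_ediv_iff_mul_le hk').2 ?_, ?_⟩
    · rw [one_mul]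
      exact Int.le_of_dvd (by lia) (hdvd i)
    · rw [Int.natCast_ediv]
      exact Int.ediv_le_ediv hk' hle
  · have hquot : ∀ i, a i / k = b i / k := congrFun hab
    funext i
    rw [← Int.ediv_mul_cancel ((mem_filter.1 ha).2 i), hquot i,
      Int.ediv_mul_cancel ((mem_filter.1 hb).2 i)]

theorem exists_dvd_of_not_isPrimitiveVec [Nonempty ι] {a : ι → ℤ} (ha : a ∈ posBox ι A)
    (hnp : ¬ IsPrimitiveVec a) : ∃ k ∈ Icc 2 A, ∀ i, (k : ℤ) ∣ a i := by
  obtain ⟨i⟩ := ‹Nonempty ι›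
  obtain ⟨hone, hle⟩ := mem_posBox.1 ha i
  obtain ⟨g, y, hg, hy, rfl⟩ := exists_eq_smul_isPrimitiveVec (x := a) fun h => by simp [h] at hone
  lift g to ℕ using hg.le
  have hdvd : ∀ j, (g : ℤ) ∣ ((g : ℤ) • y) j := fun j => ⟨y j, rfl⟩
  have hg1 : g ≠ 1 := by
    rintro rfl
    exact hnp (by rwa [Nat.cast_one, one_smul])
  have hgA := Int.le_of_dvd (by lia) (hdvd i)
  exact ⟨g, mem_Icc.2 ⟨by lia, by lia⟩, hdvd⟩

theorem sum_Icc_two_inv_sq_le (A : ℕ) : ∑ k ∈ Icc 2 A, ((k : ℝ) ^ 2)⁻¹ ≤ 3 / 4 := by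
  rcases lt_or_ge A 2 with hA | hA
  · rw [Icc_eq_empty (by lia), sum_empty]
    norm_num
  · rw [← add_sum_Ioc_eq_sum_Icc hA]
    have htail := sum_Ioc_inv_sq_le_sub (α := ℝ) two_ne_zero hA
    have hinv : (0 : ℝ) ≤ (A : ℝ)⁻¹ := by positivity
    rw [Nat.cast_ofNat] at htail ⊢
    linarith

open scoped Classical in
theorem four_mul_card_filter_not_isPrimitiveVec_le [Nontrivial ι] :
    4 * #{a ∈ posBox ι A | ¬ IsPrimitiveVec a} ≤ 3 * A ^ Fintype.card ι := by
  have hsub : {a ∈ posBox ι A | ¬ IsPrimitiveVec a} ⊆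
      (Icc 2 A).biUnion fun k => {a ∈ posBox ι A | ∀ i, (k : ℤ) ∣ a i} := fun a ha => by
    obtain ⟨hbox, hnp⟩ := mem_filter.1 ha
    obtain ⟨k, hk, hdvd⟩ := exists_dvd_of_not_isPrimitiveVec hbox hnp
    exact mem_biUnion.2 ⟨k, hk, mem_filter.2 ⟨hbox, hdvd⟩⟩
  have hterm : ∀ k ∈ Icc 2 A, (#{a ∈ posBox ι A | ∀ i, (k : ℤ) ∣ a i} : ℝ) ≤
      A ^ Fintype.card ι * ((k : ℝ) ^ 2)⁻¹ := fun k hk => by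
    have hk1 : (1 : ℝ) ≤ k := Nat.one_le_cast.2 (by have := (mem_Icc.1 hk).1; lia)
    calc (#{a ∈ posBox ι A | ∀ i, (k : ℤ) ∣ a i} : ℝ) ≤ ((A / k : ℕ) : ℝ) ^ Fintype.card ι := by
          exact_mod_cast card_filter_dvd_posBox_le (by have := (mem_Icc.1 hk).1; lia)
      _ ≤ ((A : ℝ) / k) ^ Fintype.card ι := by
          gcongr
          exact Nat.cast_div_le
      _ = A ^ Fintype.card ι * ((k : ℝ) ^ Fintype.card ι)⁻¹ := by rw [div_pow, div_eq_mul_inv]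
      _ ≤ A ^ Fintype.card ι * ((k : ℝ) ^ 2)⁻¹ := by
          gcongr
          exact Fintype.one_lt_card
  have hbound : (#{a ∈ posBox ι A | ¬ IsPrimitiveVec a} : ℝ) ≤ A ^ Fintype.card ι * (3 / 4) := by
    calc (#{a ∈ posBox ι A | ¬ IsPrimitiveVec a} : ℝ)
        ≤ ∑ k ∈ Icc 2 A, (#{a ∈ posBox ι A | ∀ i, (k : ℤ) ∣ a i} : ℝ) := by
          exact_mod_cast (card_le_card hsub).trans card_biUnion_le
      _ ≤ ∑ k ∈ Icc 2 A, (A : ℝ) ^ Fintype.card ι * ((k : ℝ) ^ 2)⁻¹ := sum_le_sum hterm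
      _ ≤ A ^ Fintype.card ι * (3 / 4) := by
          rw [← mul_sum]
          gcongr
          exact sum_Icc_two_inv_sq_le A
  have : (4 * #{a ∈ posBox ι A | ¬ IsPrimitiveVec a} : ℝ) ≤ 3 * A ^ Fintype.card ι := by linarith
  exact_mod_cast this

section Slice

variable {y c : ι → ℤ} {j : ι}

/-- The translate of `a` by `t • c`, with the translation reduced modulo `m` and the `j`-th
coordinate set to `0`. For `m = y j` and `c ⬝ᵥ y = 1` these translates tell apart the `|m|` classes
of `ℤ`-vectors modulo the hyperplane orthogonal to `y`. -/
def reducedTranslate (j : ι) (m : ℤ) (c a : ι → ℤ) (t : ℕ) : ι → ℤ :=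
  fun i => if i = j then 0 else a i + t * c i % m

theorem dvd_reducedTranslate_dotProduct_sub {a : ι → ℤ} (hc : c ⬝ᵥ y = 1) (ha : a ⬝ᵥ y = 0)
    (t : ℕ) : y j ∣ reducedTranslate j (y j) c a t ⬝ᵥ y - t := by
  have hsum : reducedTranslate j (y j) c a t ⬝ᵥ y - t =
      (reducedTranslate j (y j) c a t - a - (t : ℤ) • c) ⬝ᵥ y := by
    rw [sub_dotProduct, sub_dotProduct, smul_dotProduct, ha, hc, smul_eq_mul, mul_one, sub_zero]
  rw [hsum]
  refine dvd_sum fun i _ => ?_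
  by_cases hi : i = j
  · exact hi ▸ dvd_mul_left _ _
  · refine Dvd.dvd.mul_right ?_ _
    have hmod : (reducedTranslate j (y j) c a t - a - (t : ℤ) • c) i =
        -(t * c i - t * c i % y j) := by
      simp only [reducedTranslate, Pi.sub_apply, Pi.smul_apply, smul_eq_mul, if_neg hi]
      ring
    rw [hmod, dvd_neg]
    exact Int.dvd_self_sub_emod

theorem reducedTranslate_injOn (hc : c ⬝ᵥ y = 1) (hj0 : y j ≠ 0) :
    Set.InjOn (fun p : (ι → ℤ) × ℕ => reducedTranslate j (y j) c p.1 p.2)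
      {p | p.1 ⬝ᵥ y = 0 ∧ p.2 < (y j).natAbs} := by
  rintro ⟨a, t⟩ ⟨ha, ht⟩ ⟨b, u⟩ ⟨hb, hu⟩ hab
  dsimp only at ha ht hb hu hab
  have hdvd : y j ∣ u - t := by
    have := dvd_sub (dvd_reducedTranslate_dotProduct_sub (j := j) hc ha t)
      (dvd_reducedTranslate_dotProduct_sub (j := j) hc hb u)
    rwa [hab, sub_sub_sub_cancel_left] at this
  have htu : t = u := by
    have := Int.eq_zero_of_abs_lt_dvd ((abs_dvd _ _).2 hdvd) (by grind)
    lia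
  subst htu
  rw [eq_of_dotProduct_eq_zero_of_forall_ne hj0 ha hb fun i hi => by
    simpa [reducedTranslate, hi] using congrFun hab i]

theorem reducedTranslate_mem {a : ι → ℤ} (ha : a ∈ posBox ι A) (hj0 : y j ≠ 0)
    (hjA : |y j| ≤ A) (t : ℕ) : reducedTranslate j (y j) c a t ∈
      Fintype.piFinset fun i => if i = j then {0} else Icc (1 : ℤ) (2 * A : ℕ) := by
  refine Fintype.mem_piFinset.2 fun i => ?_
  by_cases hi : i = j
  · simp [reducedTranslate, hi]
  · have := mem_posBox.1 ha i
    have := Int.emod_nonneg (t * c i) hj0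
    have := Int.emod_lt_abs (t * c i) hj0
    simp only [reducedTranslate, if_neg hi, mem_Icc]
    lia

theorem IsPrimitiveVec.card_filter_dotProduct_eq_zero_mul_le (hy : IsPrimitiveVec y)
    (hj0 : y j ≠ 0) (hjA : |y j| ≤ A) :
    #{a ∈ posBox ι A | a ⬝ᵥ y = 0} * (y j).natAbs ≤ (2 * A) ^ (Fintype.card ι - 1) := by
  obtain ⟨c, hc⟩ := hy
  have hle := card_le_card_of_injOn (s := {a ∈ posBox ι A | a ⬝ᵥ y = 0} ×ˢ range (y j).natAbs)
    (fun p => reducedTranslate j (y j) c p.1 p.2)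
    (fun p hp => reducedTranslate_mem (mem_filter.1 (mem_product.1 hp).1).1 hj0 hjA p.2)
    ((reducedTranslate_injOn hc hj0).mono fun p hp => show p.1 ⬝ᵥ y = 0 ∧ _ from
      ⟨(mem_filter.1 (mem_product.1 hp).1).2, mem_range.1 (mem_product.1 hp).2⟩)
  rwa [card_product, card_range, card_piFinset_ite_eq, card_singleton, one_mul, Int.card_Icc,
    add_sub_cancel_right, Int.toNat_natCast] at hle

end Slice

/-- The integer vectors on the two faces of the cube `[-M, M] ^ ι` orthogonal to the `j`-th axis. -/
noncomputable def oppositeFaces (j : ι) (M : ℕ) : Finset (ι → ℤ) :=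
  Fintype.piFinset fun i => if i = j then {(M : ℤ), -(M : ℤ)} else Icc (-(M : ℤ)) M

theorem card_oppositeFaces_le (j : ι) {M : ℕ} (hM : 1 ≤ M) :
    #(oppositeFaces j M) ≤ 2 * (3 * M) ^ (Fintype.card ι - 1) := by
  rw [oppositeFaces, card_piFinset_ite_eq]
  gcongr
  · exact card_le_two
  · rw [Int.card_Icc]
    lia

theorem IsPrimitiveVec.card_filter_mul_le_of_mem_oppositeFaces {y : ι → ℤ} {j : ι} {M : ℕ}
    (hy : IsPrimitiveVec y) (hface : y ∈ oppositeFaces j M) (hM : 1 ≤ M) (hMA : M ≤ A) :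
    #{a ∈ posBox ι A | a ⬝ᵥ y = 0} * M ≤ (2 * A) ^ (Fintype.card ι - 1) := by
  have hyj : (y j).natAbs = M := by
    have := Fintype.mem_piFinset.1 hface j
    rw [if_pos rfl, mem_insert, mem_singleton] at this
    lia
  rw [← hyj]
  exact hy.card_filter_dotProduct_eq_zero_mul_le (by lia) (by rw [Int.abs_eq_natAbs]; lia)

theorem exists_mem_oppositeFaces {y : ι → ℤ} (hy0 : y ≠ 0) (hyX : ∀ i, |y i| ≤ X) :
    ∃ j, ∃ M ∈ Icc 1 X, y ∈ oppositeFaces j M := by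
  obtain ⟨i, hi⟩ := Function.ne_iff.1 hy0
  have : Nonempty ι := ⟨i⟩
  obtain ⟨j, hj⟩ := Finite.exists_max fun i => |y i|
  have hpos : 0 < |y j| := (abs_pos.2 hi).trans_le (hj i)
  have hyj := hyX j
  rw [Int.abs_eq_natAbs] at hpos hyj
  refine ⟨j, (y j).natAbs, mem_Icc.2 ⟨by lia, by lia⟩, Fintype.mem_piFinset.2 fun i => ?_⟩
  by_cases hij : i = j
  · rw [if_pos hij, hij, mem_insert, mem_singleton]
    lia
  · rw [if_neg hij, mem_Icc, Int.natCast_natAbs]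
    exact abs_le.1 (hj i)

open scoped Classical in
theorem card_filter_exists_oppositeFaces_le [Nontrivial ι] (j : ι) {M : ℕ} (hM : M ∈ Icc 1 X)
    (hXA : X ≤ A) :
    #{a ∈ posBox ι A | ∃ y ∈ oppositeFaces j M, IsPrimitiveVec y ∧ a ⬝ᵥ y = 0} ≤
      2 * 6 ^ (Fintype.card ι - 1) * X ^ (Fintype.card ι - 2) * A ^ (Fintype.card ι - 1) := by
  obtain ⟨hM1, hMX⟩ := mem_Icc.1 hM
  obtain ⟨n, hn⟩ := Nat.exists_eq_add_of_lt (Fintype.one_lt_card (α := ι))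
  have hsub : {a ∈ posBox ι A | ∃ y ∈ oppositeFaces j M, IsPrimitiveVec y ∧ a ⬝ᵥ y = 0} ⊆
      {y ∈ oppositeFaces j M | IsPrimitiveVec y}.biUnion
        fun y => {a ∈ posBox ι A | a ⬝ᵥ y = 0} := fun a ha => by
    obtain ⟨hbox, y, hy, hprim, hay⟩ := mem_filter.1 ha
    exact mem_biUnion.2 ⟨y, mem_filter.2 ⟨hy, hprim⟩, mem_filter.2 ⟨hbox, hay⟩⟩
  refine Nat.le_of_mul_le_mul_right ?_ hM1
  calc #{a ∈ posBox ι A | ∃ y ∈ oppositeFaces j M, IsPrimitiveVec y ∧ a ⬝ᵥ y = 0} * M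
      ≤ (∑ y ∈ oppositeFaces j M with IsPrimitiveVec y, #{a ∈ posBox ι A | a ⬝ᵥ y = 0}) * M := by
        gcongr
        exact (card_le_card hsub).trans card_biUnion_le
    _ ≤ #(oppositeFaces j M) * (2 * A) ^ (Fintype.card ι - 1) := by
        rw [sum_mul]
        refine (sum_le_card_nsmul _ _ _ fun y hy =>
          (mem_filter.1 hy).2.card_filter_mul_le_of_mem_oppositeFaces
          (mem_filter.1 hy).1 hM1 (hMX.trans hXA)).trans ?_
        rw [smul_eq_mul]
        gcongr
        exact filter_subset _ _
    _ ≤ 2 * (3 * M) ^ (Fintype.card ι - 1) * (2 * A) ^ (Fintype.card ι - 1) := by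
        gcongr
        exact card_oppositeFaces_le j hM1
    _ = 2 * 6 ^ (Fintype.card ι - 1) * M ^ (Fintype.card ι - 2) * A ^ (Fintype.card ι - 1) * M := by
        rw [hn, Nat.add_sub_cancel, show 1 + n + 1 - 2 = n by lia, show 6 = 3 * 2 by rfl]
        simp only [mul_pow]
        ring
    _ ≤ 2 * 6 ^ (Fintype.card ι - 1) * X ^ (Fintype.card ι - 2) * A ^ (Fintype.card ι - 1) * M := by
        gcongr

open scoped Classical in
theorem card_filter_not_noShortRelation_le [Nontrivial ι] (hXA : X ≤ A) :
    #{a ∈ posBox ι A | ¬ NoShortRelation a X} ≤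
      2 * Fintype.card ι * 6 ^ (Fintype.card ι - 1) * X ^ (Fintype.card ι - 1) *
        A ^ (Fintype.card ι - 1) := by
  have hsub : {a ∈ posBox ι A | ¬ NoShortRelation a X} ⊆
      (univ ×ˢ Icc 1 X : Finset (ι × ℕ)).biUnion fun p =>
        {a ∈ posBox ι A | ∃ y ∈ oppositeFaces p.1 p.2, IsPrimitiveVec y ∧ a ⬝ᵥ y = 0} :=
      fun a ha => by
    obtain ⟨hbox, hshort⟩ := mem_filter.1 ha
    simp only [NoShortRelation, not_forall] at hshort
    obtain ⟨x, hax, hxX, hx0⟩ := hshort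
    obtain ⟨g, y, hg, hy, rfl⟩ := exists_eq_smul_isPrimitiveVec hx0
    have hyX (i : ι) : |y i| ≤ X := by
      refine le_trans ?_ (hxX i)
      rw [Pi.smul_apply, smul_eq_mul, abs_mul]
      exact le_mul_of_one_le_left (abs_nonneg _) (Int.one_le_abs hg.ne')
    obtain ⟨j, M, hM, hface⟩ := exists_mem_oppositeFaces hy.ne_zero hyX
    rw [dotProduct_smul, smul_eq_mul, mul_eq_zero, or_iff_right hg.ne'] at hax
    exact mem_biUnion.2
      ⟨(j, M), mem_product.2 ⟨mem_univ j, hM⟩, mem_filter.2 ⟨hbox, y, hface, hy, hax⟩⟩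
  obtain ⟨n, hn⟩ := Nat.exists_eq_add_of_lt (Fintype.one_lt_card (α := ι))
  refine (card_le_card hsub).trans (card_biUnion_le.trans ((sum_le_card_nsmul _ _ _ fun p hp =>
    card_filter_exists_oppositeFaces_le p.1 (mem_product.1 hp).2 hXA).trans_eq ?_))
  rw [card_product, card_univ, Nat.card_Icc, Nat.add_sub_cancel, smul_eq_mul, hn,
    show 1 + n + 1 - 2 = n by lia, Nat.add_sub_cancel]
  ring

open scoped Classical in
theorem pow_card_le_eight_mul_card_filter [Nontrivial ι]
    (hXA : 16 * Fintype.card ι * 6 ^ (Fintype.card ι - 1) * X ^ (Fintype.card ι - 1) ≤ A) :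
    A ^ Fintype.card ι ≤ 8 * #{a ∈ posBox ι A | IsPrimitiveVec a ∧ NoShortRelation a X} := by
  have hcard := Fintype.one_lt_card (α := ι)
  have hX_le : X ≤ A := by
    calc X ≤ X ^ (Fintype.card ι - 1) := Nat.le_self_pow (by lia) X
      _ ≤ 16 * Fintype.card ι * 6 ^ (Fintype.card ι - 1) * X ^ (Fintype.card ι - 1) :=
        Nat.le_mul_of_pos_left _ (by positivity)
      _ ≤ A := hXA
  have hrel : 8 * #{a ∈ posBox ι A | ¬ NoShortRelation a X} ≤ A ^ Fintype.card ι := by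
    calc 8 * #{a ∈ posBox ι A | ¬ NoShortRelation a X}
        ≤ 8 * (2 * Fintype.card ι * 6 ^ (Fintype.card ι - 1) * X ^ (Fintype.card ι - 1) *
            A ^ (Fintype.card ι - 1)) := by
          gcongr
          exact card_filter_not_noShortRelation_le hX_le
      _ = 16 * Fintype.card ι * 6 ^ (Fintype.card ι - 1) * X ^ (Fintype.card ι - 1) *
            A ^ (Fintype.card ι - 1) := by ring
      _ ≤ A * A ^ (Fintype.card ι - 1) := by gcongr
      _ = A ^ Fintype.card ι := mul_pow_sub_one Fintype.card_ne_zero A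
  have hprim := four_mul_card_filter_not_isPrimitiveVec_le (ι := ι) (A := A)
  have hsub : posBox ι A ⊆ {a ∈ posBox ι A | IsPrimitiveVec a ∧ NoShortRelation a X} ∪
      ({a ∈ posBox ι A | ¬ IsPrimitiveVec a} ∪ {a ∈ posBox ι A | ¬ NoShortRelation a X}) := by
    intro a ha
    simp only [mem_union, mem_filter, ha, true_and]
    tauto
  have hle := (card_le_card hsub).trans ((card_union_le _ _).trans
    (Nat.add_le_add_left (card_union_le _ _) _))
  rw [card_posBox] at hle
  lia

end Counting

section Bounds

variable {ι : Type*} [Fintype ι]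

theorem HasShortReps.exists_mem_hullVertices_of_lt {a : ι → ℤ} {A L r : ℕ} (ha : HasShortReps a L)
    (hL : 1 ≤ L) (ha0 : a ≠ 0) (haA : ∀ i, |a i| ≤ A)
    (hr : 144 * (Fintype.card ι) ^ 2 * A * L ^ 2 < r) :
    ∃ v ∈ hullVertices (latticeBall ι r),
      r * euclideanLength a - 2 ≤ realVec a ⬝ᵥ realVec v := by
  obtain ⟨i, -⟩ := Function.ne_iff.1 ha0
  have : Nonempty ι := ⟨i⟩
  have hL' : (1 : ℝ) ≤ L := Nat.one_le_cast.2 hL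
  have hd : (1 : ℝ) ≤ Fintype.card ι := Nat.one_le_cast.2 Fintype.card_pos
  refine ha.exists_mem_hullVertices ha0 ?_
  calc euclideanLength a * (1 + Fintype.card ι * ((L : ℝ) + 1) ^ 2)
      ≤ Fintype.card ι * A * (Fintype.card ι * L ^ 2 + Fintype.card ι * (L + L) ^ 2) := by
        gcongr
        · exact euclideanLength_le haA
        · exact one_le_mul_of_one_le_of_one_le hd (one_le_pow₀ hL')
    _ ≤ ((144 * (Fintype.card ι) ^ 2 * A * L ^ 2 : ℕ) : ℝ) := by
        have : (0 : ℝ) ≤ (Fintype.card ι) ^ 2 * A * L ^ 2 := by positivity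
        push_cast
        linarith
    _ ≤ 2 * r := by
        have : ((144 * (Fintype.card ι) ^ 2 * A * L ^ 2 : ℕ) : ℝ) < r := Nat.cast_lt.2 hr
        linarith [(Nat.cast_nonneg r : (0 : ℝ) ≤ r)]

theorem card_le_ncard_hullVertices_latticeBall [DecidableEq ι] {T : Finset (ι → ℤ)} {A L r : ℕ}
    (hL : 1 ≤ L) (hr : 144 * (Fintype.card ι) ^ 2 * A * L ^ 2 < r) (hTA : T ⊆ posBox ι A)
    (hT : ∀ a ∈ T, IsPrimitiveVec a ∧ HasShortReps a L) :
    #T ≤ (hullVertices (latticeBall ι r)).ncard := by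
  have hbox : ∀ a ∈ T, ∀ i, 1 ≤ a i ∧ a i ≤ A := fun a ha => mem_posBox.1 (hTA ha)
  have hvertex : ∀ a ∈ T, ∃ v ∈ hullVertices (latticeBall ι r),
      r * euclideanLength a - 2 ≤ realVec a ⬝ᵥ realVec v := fun a ha =>
    (hT a ha).2.exists_mem_hullVertices_of_lt hL (hT a ha).1.ne_zero
      (fun i => abs_le.2 ⟨by have := (hbox a ha i).1; lia, (hbox a ha i).2⟩) hr
  choose! f hf hfa using hvertex
  rw [← Set.ncard_coe_finset]
  refine Set.ncard_le_ncard_of_injOn f hf (fun a ha b hb hab => ?_) hullVertices_latticeBall_finite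
  exact eq_of_common_vertex hL hr (hullVertices_subset _ (hf a ha)) (hbox a ha) (hbox b hb)
    (hT a ha).1 (hT b hb).1 (hT a ha).2 (hT b hb).2 (hfa a ha) (hab ▸ hfa b hb)

-- In the box of side `A ~ s ^ (d - 1)` a positive proportion of the vectors has no relation shorter
-- than `d * s`, hence representations of size `L ~ s`; so `A * L ^ 2 < r` means `s ^ (d + 1) ≲ r`.
theorem exists_pow_le_ncard_hullVertices_latticeBall (ι : Type*) [Fintype ι] [Nontrivial ι] :
    ∃ C : ℕ, 1 ≤ C ∧ ∀ s r : ℕ, 1 ≤ s → C * s ^ (Fintype.card ι + 1) ≤ r →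
      s ^ (Fintype.card ι * (Fintype.card ι - 1)) ≤
        8 * (hullVertices (latticeBall ι r)).ncard := by
  classical
  set d := Fintype.card ι
  obtain ⟨n, hn⟩ : ∃ n, d = n + 1 := Nat.exists_eq_add_one.2 Fintype.card_pos
  set K := 16 * d * 6 ^ (d - 1) * d ^ (d - 1)
  have : 0 < d := Fintype.card_pos
  have hK : 1 ≤ K := Nat.one_le_iff_ne_zero.2 (by positivity)
  refine ⟨144 * d ^ 4 * K * (2 * K + 1) ^ 2 + 1, Nat.le_add_left _ _, fun s r hs hr => ?_⟩
  set A := K * s ^ (d - 1)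
  set L := d * (2 * K + 1) * s
  have hL : 1 ≤ L := Nat.one_le_iff_ne_zero.2 (by positivity)
  have hr' : 144 * d ^ 2 * A * L ^ 2 < r := by
    calc 144 * d ^ 2 * A * L ^ 2 = 144 * d ^ 4 * K * (2 * K + 1) ^ 2 * s ^ (d + 1) := by
          simp only [A, L, hn, Nat.add_sub_cancel]
          ring
      _ < (144 * d ^ 4 * K * (2 * K + 1) ^ 2 + 1) * s ^ (d + 1) := by
          rw [add_one_mul]
          exact Nat.lt_add_of_pos_right (by positivity)
      _ ≤ r := hr
  have hreps : ∀ a ∈ ({a ∈ posBox ι A | IsPrimitiveVec a ∧ NoShortRelation a (d * s)} :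
      Finset (ι → ℤ)), IsPrimitiveVec a ∧ HasShortReps a L := fun a ha => by
    obtain ⟨hbox, hprim, hshort⟩ := mem_filter.1 ha
    refine ⟨hprim, hprim.hasShortReps hs hshort fun i => ?_⟩
    obtain ⟨hone, hle⟩ := mem_posBox.1 hbox i
    rw [abs_of_pos (by lia)]
    refine hle.trans (Nat.cast_le.2 ?_)
    exact Nat.mul_le_mul_left K (Nat.pow_le_pow_left (Nat.le_add_right s 1) _)
  calc s ^ (d * (d - 1)) ≤ A ^ d := by
        rw [mul_comm, pow_mul]
        exact Nat.pow_le_pow_left (Nat.le_mul_of_pos_left _ hK) d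
    _ ≤ 8 * #{a ∈ posBox ι A | IsPrimitiveVec a ∧ NoShortRelation a (d * s)} :=
        pow_card_le_eight_mul_card_filter (by rw [mul_pow, ← mul_assoc])
    _ ≤ 8 * (hullVertices (latticeBall ι r)).ncard := Nat.mul_le_mul_left 8
        (card_le_ncard_hullVertices_latticeBall hL hr' (filter_subset _ _) hreps)

theorem exists_mul_pow_le_ncard_hullVertices_latticeBall (ι : Type*) [Fintype ι] [Nontrivial ι] :
    ∃ c : ℝ, 0 < c ∧ ∀ (r : ℕ) (t : ℝ), 0 ≤ t → t ^ (Fintype.card ι + 1) = r →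
      c * t ^ (Fintype.card ι * (Fintype.card ι - 1)) ≤
        (hullVertices (latticeBall ι r)).ncard := by
  obtain ⟨C, hC1, hC⟩ := exists_pow_le_ncard_hullVertices_latticeBall ι
  set e := Fintype.card ι * (Fintype.card ι - 1)
  have hC0 : (0 : ℝ) < C := Nat.cast_pos.2 hC1
  refine ⟨1 / ((2 * C) ^ e * 8), by positivity, fun r t ht htr => ?_⟩
  set s := ⌊t / C⌋₊
  have hpow : (max s 1) ^ e ≤ 8 * (hullVertices (latticeBall ι r)).ncard := by
    rcases Nat.eq_zero_or_pos s with hs | hs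
    · rw [hs, max_eq_right zero_le_one, one_pow]
      exact one_le_ncard_hullVertices_latticeBall.trans (Nat.le_mul_of_pos_left _ (by norm_num))
    · rw [max_eq_left hs]
      refine hC s r hs ?_
      have hst : (s : ℝ) * C ≤ t := (le_div_iff₀ hC0).1 (Nat.floor_le (by positivity))
      have : (C * s ^ (Fintype.card ι + 1) : ℝ) ≤ r := by
        calc (C * s ^ (Fintype.card ι + 1) : ℝ)
            ≤ (C : ℝ) ^ (Fintype.card ι + 1) * s ^ (Fintype.card ι + 1) := by
              gcongr
              exact le_self_pow₀ (Nat.one_le_cast.2 hC1) (Nat.succ_ne_zero _)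
          _ = (s * C) ^ (Fintype.card ι + 1) := by rw [mul_comm, mul_pow]
          _ ≤ t ^ (Fintype.card ι + 1) := by gcongr
          _ = r := htr
      exact_mod_cast this
  have ht_le : t ≤ 2 * C * (max s 1 : ℕ) := by
    have hlt : t < (s + 1) * C := (div_lt_iff₀ hC0).1 (Nat.lt_floor_add_one _)
    have hs2 : ((s + 1 : ℕ) : ℝ) ≤ (2 * max s 1 : ℕ) := Nat.cast_le.2 (by lia)
    push_cast at hs2 ⊢
    nlinarith
  rw [one_div_mul_eq_div, div_le_iff₀ (by positivity)]
  calc t ^ e ≤ (2 * C * (max s 1 : ℕ)) ^ e := by gcongr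
    _ = (2 * C) ^ e * ((max s 1 ^ e : ℕ) : ℝ) := by rw [mul_pow, Nat.cast_pow]
    _ ≤ (2 * C) ^ e * ((8 * (hullVertices (latticeBall ι r)).ncard : ℕ) : ℝ) := by gcongr
    _ = (hullVertices (latticeBall ι r)).ncard * ((2 * C) ^ e * 8) := by
        push_cast
        ring

theorem exists_ncard_hullVertices_latticeBall_le_mul_pow (ι : Type*) [Fintype ι] [Nontrivial ι] :
    ∃ c : ℝ, 0 < c ∧ ∀ (r : ℕ) (t : ℝ), 1 ≤ t → t ^ (Fintype.card ι + 1) = r →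
      (hullVertices (latticeBall ι r)).ncard ≤
        c * t ^ (Fintype.card ι * (Fintype.card ι - 1)) := by
  set V := volume.real (cornerSimplex ι)
  have hV : 0 < V := measureReal_cornerSimplex_pos
  obtain ⟨n, hn⟩ : ∃ n, Fintype.card ι = n + 1 := Nat.exists_eq_add_one.2 Fintype.card_pos
  refine ⟨6 ^ (n + 1) + 4 ^ (n + 1) / V, by positivity, fun r t ht htr => ?_⟩
  have ht0 : 0 < t := one_pos.trans_le ht
  have htn : 1 ≤ t ^ n := one_le_pow₀ ht
  have hr : 1 ≤ r := by
    have : (1 : ℝ) ≤ r := htr ▸ one_le_pow₀ ht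
    exact_mod_cast this
  have hA : 1 ≤ ⌈t ^ n⌉₊ := Nat.one_le_iff_ne_zero.2 (Nat.ceil_pos.2 (by positivity)).ne'
  have hle := ncard_hullVertices_latticeBall_le (ι := ι) hr hA
  rw [hn] at hle htr ⊢
  calc ((hullVertices (latticeBall ι r)).ncard : ℝ)
      ≤ (2 * ⌈t ^ n⌉₊ + 1) ^ (n + 1) + (4 * r) ^ (n + 1) / (r * ⌈t ^ n⌉₊ * V) := hle
    _ ≤ (6 * t ^ n) ^ (n + 1) + (4 * r) ^ (n + 1) / (r * t ^ n * V) := by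
        have := Nat.ceil_lt_add_one (zero_le_one.trans htn)
        gcongr
        · linarith
        · exact Nat.le_ceil _
    _ = (6 ^ (n + 1) + 4 ^ (n + 1) / V) * t ^ ((n + 1) * (n + 1 - 1)) := by
        rw [← htr, Nat.add_sub_cancel]
        field_simp
        ring

theorem rpow_one_div_add_one_pow (d : ℕ) {r : ℝ} (hr : 0 ≤ r) :
    (r ^ (1 / ((d : ℝ) + 1))) ^ (d + 1) = r := by
  rw [one_div, ← Nat.cast_add_one, Real.rpow_inv_natCast_pow hr (Nat.succ_ne_zero d)]

theorem rpow_one_div_add_one_pow_mul {d : ℕ} (hd : 1 ≤ d) {r : ℝ} (hr : 0 ≤ r) :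
    (r ^ (1 / ((d : ℝ) + 1))) ^ (d * (d - 1)) =
      r ^ (((d : ℝ) * ((d : ℝ) - 1)) / ((d : ℝ) + 1)) := by
  rw [← Real.rpow_natCast, ← Real.rpow_mul hr, Nat.cast_mul, Nat.cast_sub hd, Nat.cast_one,
    one_div_mul_eq_div]

end Bounds

/-- Bárány–Larman: for every constant dimension `d ≥ 2`,
`|V_d(r)| = Θ(r^{d(d−1)/(d+1)})`; in particular for `d = 2` it is `Θ(r^{2/3})`. -/
theorem stmt10 (d : ℕ) (hd : 2 ≤ d) :
    ∃ c₁ c₂ : ℝ, 0 < c₁ ∧ 0 < c₂ ∧ ∀ r : ℕ, 1 ≤ r →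
      c₁ * (r : ℝ) ^ (((d : ℝ) * ((d : ℝ) - 1)) / ((d : ℝ) + 1)) ≤ (Set.ncard (Vd d r) : ℝ) ∧
      (Set.ncard (Vd d r) : ℝ) ≤ c₂ * (r : ℝ) ^ (((d : ℝ) * ((d : ℝ) - 1)) / ((d : ℝ) + 1)) := by
  have : Nontrivial (Fin d) := Fin.nontrivial_iff_two_le.2 hd
  obtain ⟨c₁, hc₁, hlower⟩ := exists_mul_pow_le_ncard_hullVertices_latticeBall (Fin d)
  obtain ⟨c₂, hc₂, hupper⟩ := exists_ncard_hullVertices_latticeBall_le_mul_pow (Fin d)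
  rw [Fintype.card_fin] at hlower hupper
  refine ⟨c₁, c₂, hc₁, hc₂, fun r hr => ?_⟩
  have hr1 : (1 : ℝ) ≤ r := Nat.one_le_cast.2 hr
  have hr0 : (0 : ℝ) ≤ r := zero_le_one.trans hr1
  set t : ℝ := (r : ℝ) ^ (1 / ((d : ℝ) + 1))
  have ht : 1 ≤ t := Real.one_le_rpow hr1 (by positivity)
  have htr : t ^ (d + 1) = r := rpow_one_div_add_one_pow d hr0
  rw [Vd_eq_hullVertices_latticeBall, ← rpow_one_div_add_one_pow_mul (one_le_two.trans hd) hr0]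
  exact ⟨hlower r t (zero_le_one.trans ht) htr, hupper r t ht htr⟩
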